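/- Let f: [0,1] → [0,1] be a topologically transitive continuous piecewise linear map with constant slope s > 1. Then f has limit shadowing if and only if f has shadowing (equivalently, if and only if f has s-limit shadowing, equivalently the linking property). -/

import Mathlib

/-!
The equivalences are proved along the cycle limit shadowing ⇒ shadowing ⇒ linking ⇒ s-limit
shadowing ⇒ limit shadowing. Throughout, `C` is the finite set of critical points, and `f` is used
only through `FoldMap`: it is `s`-Lipschitz, it is affine with slope `±s` between critical points,
and near a critical point `c` it is a fold, `f x = f c ± s * |x - c|`.

*Limit shadowing ⇒ shadowing* (`finiteShadowing_of_limit`, `FiniteShadowing.shadowing`). If for some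
`ε` arbitrarily accurate finite pseudo-orbits fail to be `ε`-shadowed, transitivity joins infinitely
many of them, with errors tending to zero, into one asymptotic pseudo-orbit. A point which shadows
it asymptotically shadows all but finitely many of the pieces. Compactness passes from finite to
infinite pseudo-orbits. *s-limit shadowing ⇒ limit shadowing* (`limit_of_slimit`) discards an
initial piece of the pseudo-orbit and pulls the shadowing point back by surjectivity.

*One-sidedness at critical points.* All points close to `c` are sent by `f` to one side of `f c`. As
long as no critical point interferes, the images of a neighbourhood of `c` stay on one side of the
orbit of `c`; `IsDir` records that side as a sign `σ j` at time `j + 1`. The point `c` is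
`ε`-linked to a critical point exactly when some critical point lies within `ε` of `f^[j + 1] c` on
the side `σ j`, which is `NearLinked`.

*Shadowing ⇒ linking* (`nearLinked_of_shadowing`). Suppose the orbit of `c` meets no critical point
on its `σ`-side up to distance `ε`. If the orbit stays away from `C` altogether, follow `c` by the
orbit of a point slightly on the wrong side of `f c`; every candidate for a shadowing point starts
on the right side, and the gap between the two grows like `s ^ n` (`away_case`). Otherwise the orbit
accumulates at a critical point `y`, necessarily from the other side, and one jumps from the orbit
of `c` to the orbit of `y` when they are close. A shadowing orbit passes near `y` but not through
`y`, and its distance from the orbit of `y` grows exponentially (`expand_near`).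

*Linking ⇒ s-limit shadowing.* Fix lengths `δ ≪ κ ≪ E ≪ L` (`Scale`). Along a pseudo-orbit `x` one
carries a segment `A_n` near `x n`, each contained in the image of the preceding one; pulling back a
point of a late segment gives a point which shadows `x` up to that time (`Tr`). There are two
kinds of segments (`State`). Away from `C` the segment contains the points near `x n` up to distance
`κ` on both sides, and reaches further on one side. After a passage near a critical point `c` the
pseudo-orbit may run on the wrong side of the orbit of `c`, so the segment is one-sided, starting at
the orbit of `c` itself. Either the pseudo-orbit departs to the right side, and the segment is again
of the first kind, or by the linking property the orbit of `c` meets another critical point `y` on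
the right side, within `E`; then `y` lies in the segment and the process restarts at `f y`. For the
restart the segment has to be of length about `L`, much larger than `E`. Its length may grow only by
a factor `q < s` at each step, so it starts growing `T` steps before the encounter (`Len`). No
other critical point is met during these steps, because the critical orbits of length `T` form a
finite set, and a point close to `C` is pushed away from it (`Scale.away`).

Passing to a finer scale is possible whenever the process restarts, or when the pseudo-orbit has
left the neighbourhood of `C` for good (`Scale.refine`). For an asymptotic pseudo-orbit a sequence
of scales tending to zero gives asymptotic shadowing (`asymptotic_of_linking`).
-/

/-- `x` is a `δ`-pseudo-orbit for `f` contained in `A`, and `z ∈ A` `ε`-shadows it. -/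
def ShadowingOn {X : Type*} [MetricSpace X] (f : X → X) (A : Set X) : Prop :=
  ∀ ε : ℝ, 0 < ε → ∃ δ : ℝ, 0 < δ ∧
    ∀ x : ℕ → X, (∀ n, x n ∈ A) → (∀ n, dist (f (x n)) (x (n + 1)) < δ) →
      ∃ z ∈ A, ∀ n, dist (f^[n] z) (x n) < ε

def LimitShadowingOn {X : Type*} [MetricSpace X] (f : X → X) (A : Set X) : Prop :=
  ∀ x : ℕ → X, (∀ n, x n ∈ A) →
    Filter.Tendsto (fun n => dist (f (x n)) (x (n + 1))) Filter.atTop (nhds 0) →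
    ∃ z ∈ A, Filter.Tendsto (fun n => dist (f^[n] z) (x n)) Filter.atTop (nhds 0)

def SLimitShadowingOn {X : Type*} [MetricSpace X] (f : X → X) (A : Set X) : Prop :=
  ∀ ε : ℝ, 0 < ε → ∃ δ : ℝ, 0 < δ ∧
    (∀ x : ℕ → X, (∀ n, x n ∈ A) → (∀ n, dist (f (x n)) (x (n + 1)) < δ) →
      ∃ z ∈ A, ∀ n, dist (f^[n] z) (x n) < ε) ∧
    (∀ x : ℕ → X, (∀ n, x n ∈ A) → (∀ n, dist (f (x n)) (x (n + 1)) < δ) →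
      Filter.Tendsto (fun n => dist (f (x n)) (x (n + 1))) Filter.atTop (nhds 0) →
      ∃ z ∈ A, (∀ n, dist (f^[n] z) (x n) < ε) ∧
        Filter.Tendsto (fun n => dist (f^[n] z) (x n)) Filter.atTop (nhds 0))
/-- `f` is piecewise linear on `[0,1]` with constant slope `±s`. -/
def PiecewiseLinearConstSlope (f : ℝ → ℝ) (s : ℝ) : Prop :=
  ∃ (k : ℕ) (p : Fin (k + 2) → ℝ), StrictMono p ∧ p 0 = 0 ∧ p (Fin.last (k + 1)) = 1 ∧
    ∀ i : Fin (k + 1), ∃ a b : ℝ, |b| = s ∧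
      ∀ x ∈ Set.Icc (p i.castSucc) (p i.succ), f x = a + b * x

/-- The critical points of an interval map `f : [0,1] → [0,1]`: the endpoints together
with the points where `f` is not differentiable or has zero derivative. -/
def Crit (f : ℝ → ℝ) : Set ℝ :=
  {x | x ∈ Set.Icc (0 : ℝ) 1 ∧
    (x = 0 ∨ x = 1 ∨ ¬ DifferentiableAt ℝ f x ∨ deriv f x = 0)}

/-- `x` is `ε`-linked to `y` by `f` (with all relevant points lying in `A`). -/
def EpsLinkedOn (f : ℝ → ℝ) (A : Set ℝ) (ε x y : ℝ) : Prop :=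
  ∃ m : ℕ, 1 ≤ m ∧ ∃ z ∈ A, f^[m] z = y ∧ ∀ j ≤ m, |f^[j] x - f^[j] z| ≤ ε

/-- `x` is linked to `y` by `f` (as a map of `A`). -/
def LinkedOn (f : ℝ → ℝ) (A : Set ℝ) (x y : ℝ) : Prop :=
  ∀ ε : ℝ, 0 < ε → EpsLinkedOn f A ε x y

/-- `f : [0,1] → [0,1]` has the linking property: every critical point is linked to
some critical point. -/
def LinkingProperty (f : ℝ → ℝ) : Prop :=
  ∀ x ∈ Crit f, ∃ y ∈ Crit f, LinkedOn f (Set.Icc (0 : ℝ) 1) x y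

/-- `f` is topologically transitive as a map of `A`. -/
def TransitiveOn (f : ℝ → ℝ) (A : Set ℝ) : Prop :=
  ∀ U V : Set ℝ, IsOpen U → IsOpen V → (U ∩ A).Nonempty → (V ∩ A).Nonempty →
    ∃ n : ℕ, ∃ x ∈ U ∩ A, f^[n] x ∈ V ∩ A

open Set Filter Topology

/-! ### Piecewise linear maps of constant slope as fold maps -/

/-- The properties of a piecewise linear self-map `f` of `[0,1]` with constant slope `s > 1` on which
the argument rests, `C` being its critical set: a finite set containing both endpoints.
`ray`: along each ray starting at `u` in direction `τ = ±1`, `f` is affine with slope `±s` until the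
ray has met a point of `C`; the slope does not depend on how far one goes.
`fold`: near a point `c` of `C` all values of `f` lie on one side of `f c`, at distance
`s * |x - c|`. At `c = 0` and `c = 1` this is a statement about the one side inside `[0,1]`. -/
structure FoldMap (f : ℝ → ℝ) (s : ℝ) (C : Set ℝ) : Prop where
  one_lt : 1 < s
  maps : MapsTo f (Icc (0 : ℝ) 1) (Icc (0 : ℝ) 1)
  fin : C.Finite
  sub : C ⊆ Icc (0 : ℝ) 1
  zero_mem : (0 : ℝ) ∈ C
  one_mem : (1 : ℝ) ∈ C
  lip : ∀ u ∈ Icc (0 : ℝ) 1, ∀ v ∈ Icc (0 : ℝ) 1, |f u - f v| ≤ s * |u - v|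
  ray : ∀ u ∈ Icc (0 : ℝ) 1, ∀ τ : ℝ, |τ| = 1 → ∃ σ : ℝ, |σ| = 1 ∧
    ∀ t, 0 ≤ t → u + τ * t ∈ Icc (0 : ℝ) 1 → (∀ t', 0 < t' → t' < t → u + τ * t' ∉ C) →
      f (u + τ * t) = f u + σ * (s * t)
  fold : ∃ r > 0, ∀ c ∈ C, ∃ σ : ℝ, |σ| = 1 ∧
    ∀ x ∈ Icc (0 : ℝ) 1, |x - c| ≤ r → f x = f c + σ * (s * |x - c|)

section PL
variable {f : ℝ → ℝ} {s : ℝ}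

/-- To the right of a point `f` is affine with slope `±s` on a short interval. -/
theorem PiecewiseLinearConstSlope.right_germ (h : PiecewiseLinearConstSlope f s) {x : ℝ}
    (hx0 : 0 ≤ x) (hx1 : x < 1) :
    ∃ ε > 0, ∃ b, |b| = s ∧ ∀ t, 0 ≤ t → t ≤ ε → f (x + t) = f x + b * t := by
  obtain ⟨k, p, hp, h0, h1, hl⟩ := h
  have key : ∀ j : Fin (k + 2), x < p j →
      ∃ i : Fin (k + 1), p i.castSucc ≤ x ∧ x < p i.succ := by
    intro j
    induction j using Fin.induction with
    | zero => intro h; rw [h0] at h; linarith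
    | succ i ih =>
      intro h
      by_cases h' : x < p i.castSucc
      · exact ih h'
      · exact ⟨i, not_lt.1 h', h⟩
  obtain ⟨i, hi1, hi2⟩ := key (Fin.last _) (by rw [h1]; exact hx1)
  obtain ⟨a, b, hb, hf⟩ := hl i
  refine ⟨p i.succ - x, by linarith, b, hb, fun t ht0 ht1 => ?_⟩
  rw [hf (x + t) ⟨by linarith, by linarith⟩, hf x ⟨hi1, hi2.le⟩]
  ring

/-- To the left of a point `f` is affine with slope `±s` on a short interval; `b` is minus the slope
there. -/
theorem PiecewiseLinearConstSlope.left_germ (h : PiecewiseLinearConstSlope f s) {x : ℝ}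
    (hx0 : 0 < x) (hx1 : x ≤ 1) :
    ∃ ε > 0, ∃ b, |b| = s ∧ ∀ t, 0 ≤ t → t ≤ ε → f (x - t) = f x + b * t := by
  obtain ⟨k, p, hp, h0, h1, hl⟩ := h
  have key : ∀ j : Fin (k + 2), x ≤ p j →
      ∃ i : Fin (k + 1), p i.castSucc < x ∧ x ≤ p i.succ := by
    intro j
    induction j using Fin.induction with
    | zero => intro h; rw [h0] at h; linarith
    | succ i ih =>
      intro h
      by_cases h' : x ≤ p i.castSucc
      · exact ih h'
      · exact ⟨i, not_le.1 h', h⟩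
  obtain ⟨i, hi1, hi2⟩ := key (Fin.last _) (by rw [h1]; exact hx1)
  obtain ⟨a, b, hb, hf⟩ := hl i
  refine ⟨x - p i.castSucc, by linarith, -b, by rwa [abs_neg], fun t ht0 ht1 => ?_⟩
  rw [hf (x - t) ⟨by linarith, by linarith⟩, hf x ⟨hi1.le, hi2⟩]
  ring

theorem hasDerivWithinAt_of_right_germ {x ε b : ℝ} (hε : 0 < ε)
    (h : ∀ t, 0 ≤ t → t ≤ ε → f (x + t) = f x + b * t) :
    HasDerivWithinAt f b (Ici x) x := by
  have h1 : HasDerivWithinAt (fun y => f x + b * (y - x)) b (Ici x) x := by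
    have := ((((hasDerivAt_id x).sub_const x).const_mul b).const_add (f x)).hasDerivWithinAt
      (s := Ici x)
    simpa using this
  refine h1.congr_of_eventuallyEq ?_ (by simp)
  have : Icc x (x + ε) ∈ 𝓝[Ici x] x := Icc_mem_nhdsGE (by linarith)
  filter_upwards [this] with y hy
  have := h (y - x) (by linarith [hy.1]) (by linarith [hy.2])
  simpa using this

theorem crit_subset_range {k : ℕ} {p : Fin (k + 2) → ℝ} (hs : 1 < s) (h0 : p 0 = 0)
    (h1 : p (Fin.last (k + 1)) = 1)
    (hl : ∀ i : Fin (k + 1), ∃ a b : ℝ, |b| = s ∧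
      ∀ x ∈ Set.Icc (p i.castSucc) (p i.succ), f x = a + b * x) : Crit f ⊆ range p := by
  rintro x ⟨hx, hc⟩
  by_contra hr
  have hne : ∀ j, p j ≠ x := fun j hj => hr ⟨j, hj⟩
  have key : ∀ j : Fin (k + 2), x < p j →
      ∃ i : Fin (k + 1), p i.castSucc < x ∧ x < p i.succ := by
    intro j
    induction j using Fin.induction with
    | zero => intro h; rw [h0] at h; linarith [hx.1]
    | succ i ih =>
      intro h
      by_cases h' : x < p i.castSucc
      · exact ih h'
      · exact ⟨i, lt_of_le_of_ne (not_lt.1 h') (hne _), h⟩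
  obtain ⟨i, hi1, hi2⟩ := key (Fin.last _) (lt_of_le_of_ne (by rw [h1]; exact hx.2) (hne _).symm)
  obtain ⟨a, b, hb, hf⟩ := hl i
  have hd : HasDerivAt f b x := by
    have h1 : HasDerivAt (fun y => a + b * y) b x := by
      simpa using ((hasDerivAt_id x).const_mul b).const_add a
    refine h1.congr_of_eventuallyEq ?_
    filter_upwards [Icc_mem_nhds hi1 hi2] with y hy using hf y hy
  rcases hc with h | h | h | h
  · exact hne 0 (by rw [h0, h])
  · exact hne (Fin.last _) (by rw [h1, h])
  · exact h hd.differentiableAt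
  · rw [hd.deriv] at h
    rw [h] at hb; simp at hb; linarith

theorem affine_of_no_crit (hs : 1 < s) (hcont : ContinuousOn f (Icc (0 : ℝ) 1))
    (hpl : PiecewiseLinearConstSlope f s) {a b : ℝ} (ha : 0 ≤ a) (hb : b ≤ 1)
    (hC : ∀ x, a < x → x < b → x ∉ Crit f) :
    ∃ σ : ℝ, |σ| = 1 ∧ ∀ x ∈ Icc a b, f x = f a + σ * (s * (x - a)) := by
  have hdiff : ∀ x ∈ Ioo a b, HasDerivAt f (deriv f x) x ∧ |deriv f x| = s := by
    intro x hx
    have hxC := hC x hx.1 hx.2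
    have hxI : x ∈ Icc (0 : ℝ) 1 := ⟨by linarith [hx.1], by linarith [hx.2]⟩
    have hd : DifferentiableAt ℝ f x := by
      by_contra hd; exact hxC ⟨hxI, Or.inr (Or.inr (Or.inl hd))⟩
    refine ⟨hd.hasDerivAt, ?_⟩
    obtain ⟨ε, hε, b', hb', hg⟩ := hpl.right_germ hxI.1 (by linarith [hx.2])
    have e := (uniqueDiffOn_Ici x x self_mem_Ici).eq_deriv _
      (hasDerivWithinAt_of_right_germ hε hg) hd.hasDerivAt.hasDerivWithinAt
    rw [← e, hb']
  have hc : ContinuousOn f (Icc a b) := hcont.mono (Icc_subset_Icc ha hb)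
  have hsgn : ∃ σ : ℝ, |σ| = 1 ∧ ∀ x ∈ Ioo a b, deriv f x = σ * s := by
    rcases hasDerivWithinAt_forall_lt_or_forall_gt_of_forall_ne (convex_Ioo a b)
      (fun x hx => (hdiff x hx).1.hasDerivWithinAt) (m := 0)
      (fun x hx h => by have := (hdiff x hx).2; rw [h] at this; simp at this; linarith) with h | h
    · refine ⟨-1, by simp, fun x hx => ?_⟩
      have := (hdiff x hx).2
      rw [abs_of_neg (h x hx)] at this; linarith
    · refine ⟨1, by simp, fun x hx => ?_⟩
      have := (hdiff x hx).2
      rw [abs_of_pos (h x hx)] at this; linarith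
  obtain ⟨σ, hσ, hd⟩ := hsgn
  refine ⟨σ, hσ, fun x hx => ?_⟩
  rcases hx.1.eq_or_lt with h | h
  · subst h; simp
  · obtain ⟨ξ, hξ, e⟩ := exists_deriv_eq_slope f h (hc.mono (Icc_subset_Icc le_rfl hx.2))
      (fun y hy => (hdiff y ⟨hy.1, hy.2.trans_le hx.2⟩).1.differentiableAt.differentiableWithinAt)
    rw [hd ξ ⟨hξ.1, hξ.2.trans_le hx.2⟩, eq_div_iff (by linarith)] at e
    linarith

theorem abs_one_cases {σ : ℝ} (h : |σ| = 1) : σ = 1 ∨ σ = -1 := by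
  rcases abs_cases σ with ⟨h1, _⟩ | ⟨h1, _⟩
  · left; linarith
  · right; linarith

theorem foldMap_of_pl (hs : 1 < s)
    (hmaps : MapsTo f (Icc (0 : ℝ) 1) (Icc (0 : ℝ) 1))
    (hcont : ContinuousOn f (Icc (0 : ℝ) 1))
    (hpl : PiecewiseLinearConstSlope f s) : FoldMap f s (Crit f) where
  one_lt := hs
  maps := hmaps
  fin := by
    obtain ⟨k, p, hp, h0, h1, hl⟩ := hpl
    exact (finite_range p).subset (crit_subset_range hs h0 h1 hl)
  sub := fun x hx => hx.1
  zero_mem := ⟨by simp, Or.inl rfl⟩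
  one_mem := ⟨by simp, Or.inr (Or.inl rfl)⟩
  lip := by
    have key : ∀ u ∈ Icc (0 : ℝ) 1, ∀ v ∈ Icc (0 : ℝ) 1, u ≤ v → |f v - f u| ≤ s * (v - u) := by
      intro u hu v hv huv
      have hd : ∀ x ∈ Ico u v, ∃ b, |b| = s ∧ HasDerivWithinAt f b (Ici x) x := by
        intro x hx
        obtain ⟨ε, hε, b', hb', hg⟩ :=
          hpl.right_germ (hu.1.trans hx.1) (hx.2.trans_le hv.2)
        exact ⟨b', hb', hasDerivWithinAt_of_right_germ hε hg⟩
      choose! g hg using hd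
      exact norm_image_sub_le_of_norm_deriv_right_le_segment
        (hcont.mono (Icc_subset_Icc hu.1 hv.2)) (fun x hx => (hg x hx).2)
        (fun x hx => (hg x hx).1.le) v ⟨huv, le_rfl⟩
    intro u hu v hv
    rcases le_total u v with h | h
    · rw [abs_sub_comm, abs_sub_comm u, abs_of_nonneg (sub_nonneg.2 h)]
      exact key u hu v hv h
    · rw [abs_of_nonneg (sub_nonneg.2 h)]
      exact key v hv u hu h
  ray := by
    intro u hu τ hτ
    -- the sign found on any one admissible segment serves for all of them
    by_cases hex : ∃ t, 0 < t ∧ u + τ * t ∈ Icc (0 : ℝ) 1 ∧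
        ∀ t', 0 < t' → t' < t → u + τ * t' ∉ Crit f
    swap
    · refine ⟨1, by simp, fun t ht h1 h2 => ?_⟩
      rcases ht.eq_or_lt with h | h
      · subst h; simp
      · exact absurd ⟨t, h, h1, h2⟩ hex
    have seg : ∀ t, 0 < t → u + τ * t ∈ Icc (0 : ℝ) 1 →
        (∀ t', 0 < t' → t' < t → u + τ * t' ∉ Crit f) →
        ∃ σ : ℝ, |σ| = 1 ∧ ∀ t', 0 ≤ t' → t' ≤ t → f (u + τ * t') = f u + σ * (s * t') := by
      intro t ht h1 h2
      rcases abs_one_cases hτ with rfl | rfl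
      · obtain ⟨σ, hσ, h⟩ := affine_of_no_crit hs hcont hpl hu.1 h1.2
          (fun x hx1 hx2 => by
            have := h2 (x - u) (by linarith) (by linarith)
            simpa using this)
        refine ⟨σ, hσ, fun t' a b => ?_⟩
        rw [h (u + 1 * t') ⟨by linarith, by linarith⟩]; ring
      · obtain ⟨σ, hσ, h⟩ := affine_of_no_crit hs hcont hpl h1.1 hu.2
          (fun x hx1 hx2 => by
            have := h2 (u - x) (by linarith) (by linarith)
            simpa using this)
        refine ⟨-σ, by rwa [abs_neg], fun t' a b => ?_⟩
        rw [h (u + -1 * t') ⟨by linarith, by linarith⟩, h u ⟨by linarith, le_rfl⟩]; ring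
    obtain ⟨t0, ht0, h01, h02⟩ := hex
    obtain ⟨σ, hσ, hf⟩ := seg t0 ht0 h01 h02
    refine ⟨σ, hσ, fun t ht h1 h2 => ?_⟩
    rcases le_or_gt t t0 with h | h
    · exact hf t ht h
    · obtain ⟨σ', hσ', hf'⟩ := seg t (ht0.trans h) h1 h2
      have e := (hf t0 ht0.le le_rfl).symm.trans (hf' t0 ht0.le h.le)
      have : σ = σ' := by
        have hne : s * t0 ≠ 0 := by positivity
        exact mul_right_cancel₀ hne (by linarith)
      rw [this]; exact hf' t ht le_rfl
  fold := by
    have loc : ∀ c ∈ Crit f, ∃ r > 0, ∃ σ : ℝ, |σ| = 1 ∧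
        ∀ x ∈ Icc (0 : ℝ) 1, |x - c| ≤ r → f x = f c + σ * (s * |x - c|) := by
      have sgn : ∀ b : ℝ, |b| = s → ∃ σ : ℝ, |σ| = 1 ∧ b = σ * s := by
        intro b hb
        refine ⟨b / s, by rw [abs_div, hb, abs_of_pos (by linarith)]; field_simp, by field_simp⟩
      intro c hc
      rcases hc.1.1.eq_or_lt with h0 | h0
      · obtain ⟨ε, hε, b, hb, hg⟩ := hpl.right_germ hc.1.1 (by linarith)
        obtain ⟨σ, hσ, rfl⟩ := sgn b hb
        refine ⟨ε, hε, σ, hσ, fun x hx hxr => ?_⟩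
        have hx0 : 0 ≤ x - c := by linarith [hx.1]
        rw [abs_of_nonneg hx0] at *
        have := hg (x - c) hx0 hxr
        rw [add_sub_cancel] at this
        rw [this]; ring
      rcases hc.1.2.eq_or_lt with h1 | h1
      · obtain ⟨ε, hε, b, hb, hg⟩ := hpl.left_germ h0 hc.1.2
        obtain ⟨σ, hσ, rfl⟩ := sgn b hb
        refine ⟨ε, hε, σ, hσ, fun x hx hxr => ?_⟩
        have hx0 : x - c ≤ 0 := by linarith [hx.2]
        rw [abs_of_nonpos hx0] at *
        have := hg (c - x) (by linarith) (by linarith)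
        rw [sub_sub_cancel] at this
        rw [this]; ring
      · obtain ⟨ε, hε, b, hb, hg⟩ := hpl.right_germ hc.1.1 h1
        obtain ⟨ε', hε', b', hb', hg'⟩ := hpl.left_germ h0 hc.1.2
        have hbb : b = b' := by
          by_contra hne
          have hb2 : b' = -b := by
            rcases abs_eq_abs.1 (hb.trans hb'.symm) with h | h
            · exact absurd h hne
            · linarith
          have hd : HasDerivAt f b c := by
            have h1 : HasDerivAt (fun y => f c + b * (y - c)) b c := by
              simpa using (((hasDerivAt_id c).sub_const c).const_mul b).const_add (f c)
            refine h1.congr_of_eventuallyEq ?_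
            filter_upwards [Icc_mem_nhds (show c - ε' < c by linarith)
              (show c < c + ε by linarith)] with y hy
            rcases le_total c y with h | h
            · have := hg (y - c) (by linarith) (by linarith [hy.2])
              rwa [add_sub_cancel] at this
            · have := hg' (c - y) (by linarith) (by linarith [hy.1])
              rw [sub_sub_cancel] at this
              rw [this, hb2]; ring
          rcases hc.2 with h | h | h | h
          · linarith
          · linarith
          · exact h hd.differentiableAt
          · rw [hd.deriv] at h
            rw [h] at hb; simp at hb; linarith
        subst hbb
        obtain ⟨σ, hσ, rfl⟩ := sgn b hb
        refine ⟨min ε ε', lt_min hε hε', σ, hσ, fun x hx hxr => ?_⟩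
        rcases le_total c x with h | h
        · have hx0 : 0 ≤ x - c := by linarith
          rw [abs_of_nonneg hx0] at *
          have := hg (x - c) hx0 (hxr.trans (min_le_left _ _))
          rw [add_sub_cancel] at this
          rw [this]; ring
        · have hx0 : x - c ≤ 0 := by linarith
          rw [abs_of_nonpos hx0] at *
          have := hg' (c - x) (by linarith) (by linarith [min_le_right ε ε'])
          rw [sub_sub_cancel] at this
          rw [this]; ring
    have hfin : (Crit f).Finite := by
      obtain ⟨k, p, hp, h0, h1, hl⟩ := hpl
      exact (finite_range p).subset (crit_subset_range hs h0 h1 hl)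
    choose! r hr σ hσ hf using loc
    have hne : (Crit f).Nonempty := ⟨0, by simp, Or.inl rfl⟩
    obtain ⟨c0, hc0, hmin⟩ := exists_min_image _ r hfin hne
    exact ⟨r c0, hr c0 hc0, fun c hc => ⟨σ c, hσ c hc, fun x hx hxr =>
      hf c hc x hx (hxr.trans (hmin c hc))⟩⟩
end PL

/-! ### Sides of critical orbits and the one-sided form of linking -/

/-- The sides of the orbit of a critical point `c`: `σ j = ±1` is the side of `f^[j + 1] c` on which the
`(j + 1)`-st images of points near `c` lie, as long as no point of `C` comes in between. By `fold`,
points at distance at most `r` from `c` are sent to the side `σ 0` of `f c`; by `step`, `f` sends the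
side `σ j` of `f^[j + 1] c` to the side `σ (j + 1)` of `f^[j + 2] c`, stretching it by `s`, up to
the first point of `C`. -/
structure IsDir (f : ℝ → ℝ) (s : ℝ) (C : Set ℝ) (r c : ℝ) (σ : ℕ → ℝ) : Prop where
  abs_eq : ∀ j, |σ j| = 1
  fold : ∀ x ∈ Icc (0 : ℝ) 1, |x - c| ≤ r → f x = f c + σ 0 * (s * |x - c|)
  step : ∀ j t, 0 ≤ t → f^[j + 1] c + σ j * t ∈ Icc (0 : ℝ) 1 →
    (∀ t', 0 < t' → t' < t → f^[j + 1] c + σ j * t' ∉ C) →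
    f (f^[j + 1] c + σ j * t) = f^[j + 2] c + σ (j + 1) * (s * t)

/-- Some forward iterate `f^[j + 1] c` has a point of `C` within distance `ε` on its side `σ j`. For
small `ε` this amounts to `c` being `ε`-linked to a point of `C`; see `nearLinked_of_epsLinked` and
`epsLinked_of_nearLinked`. -/
def NearLinked (f : ℝ → ℝ) (C : Set ℝ) (σ : ℕ → ℝ) (ε c : ℝ) : Prop :=
  ∃ j, ∃ v, 0 ≤ v ∧ v ≤ ε ∧ f^[j + 1] c + σ j * v ∈ C

theorem abs_add_sign_mul_sub {σ t : ℝ} (hσ : |σ| = 1) (ht : 0 ≤ t) (u : ℝ) :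
    |u + σ * t - u| = t := by
  rw [add_sub_cancel_left, abs_mul, hσ, one_mul, abs_of_nonneg ht]

theorem exists_sign (u v : ℝ) : ∃ τ : ℝ, |τ| = 1 ∧ v = u + τ * |v - u| := by
  rcases le_total u v with h | h
  · exact ⟨1, by simp, by rw [abs_of_nonneg (by linarith)]; ring⟩
  · exact ⟨-1, by simp, by rw [abs_of_nonpos (by linarith)]; ring⟩

theorem sign_sq_of_abs_one {σ : ℝ} (h : |σ| = 1) : σ * σ = 1 := by
  rcases abs_one_cases h with rfl | rfl <;> norm_num

theorem sign_combo_mem {u σ t t' : ℝ} (hu : u ∈ Icc (0 : ℝ) 1) (ht : u + σ * t ∈ Icc (0 : ℝ) 1)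
    (h0 : 0 ≤ t') (h1 : t' ≤ t) (hσ : |σ| = 1) : u + σ * t' ∈ Icc (0 : ℝ) 1 := by
  rcases abs_one_cases hσ with rfl | rfl
  · exact ⟨by linarith [hu.1], by linarith [ht.2]⟩
  · exact ⟨by linarith [ht.1], by linarith [hu.2]⟩

namespace FoldMap
variable {f : ℝ → ℝ} {s : ℝ} {C : Set ℝ}

theorem s_pos (F : FoldMap f s C) : 0 < s := zero_lt_one.trans F.one_lt

theorem iter_mem (F : FoldMap f s C) (n : ℕ) {x : ℝ} (hx : x ∈ Icc (0 : ℝ) 1) : f^[n] x ∈ Icc (0 : ℝ) 1 :=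
  F.maps.iterate n hx

theorem lip_iter (F : FoldMap f s C) (n : ℕ) {x y : ℝ} (hx : x ∈ Icc (0 : ℝ) 1) (hy : y ∈ Icc (0 : ℝ) 1) :
    |f^[n] x - f^[n] y| ≤ s ^ n * |x - y| := by
  induction n with
  | zero => simp
  | succ n ih =>
    rw [Function.iterate_succ_apply', Function.iterate_succ_apply', pow_succ']
    calc _ ≤ s * |f^[n] x - f^[n] y| := F.lip _ (F.iter_mem n hx) _ (F.iter_mem n hy)
      _ ≤ s * (s ^ n * |x - y|) := by have := F.s_pos; gcongr
      _ = _ := by ring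

theorem continuousOn (F : FoldMap f s C) : ContinuousOn f (Icc (0 : ℝ) 1) := by
  have : LipschitzOnWith ⟨s, F.s_pos.le⟩ f (Icc (0 : ℝ) 1) :=
    LipschitzOnWith.of_dist_le_mul fun x hx y hy => F.lip x hx y hy
  exact this.continuousOn

theorem continuousOn_iter (F : FoldMap f s C) (n : ℕ) : ContinuousOn f^[n] (Icc (0 : ℝ) 1) :=
  F.continuousOn.iterate F.maps n

/-- A segment which avoids `C` cannot leave `[0,1]`, since the endpoints belong to `C`. -/
theorem mem_of_no_crit (F : FoldMap f s C) {u τ t : ℝ} (hu : u ∈ Icc (0 : ℝ) 1) (hτ : |τ| = 1)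
    (h : ∀ t', 0 ≤ t' → t' ≤ t → u + τ * t' ∉ C) (ht : 0 ≤ t) : u + τ * t ∈ Icc (0 : ℝ) 1 := by
  rcases abs_one_cases hτ with rfl | rfl
  · refine ⟨by linarith [hu.1], ?_⟩
    by_contra hc
    push Not at hc
    refine h (1 - u) (by linarith [hu.2]) (by linarith) ?_
    convert F.one_mem using 1; ring
  · refine ⟨?_, by linarith [hu.2]⟩
    by_contra hc
    push Not at hc
    refine h u (by linarith [hu.1]) (by linarith) ?_
    convert F.zero_mem using 1; ring

/-- Every critical point has a sequence of sides: `σ 0` comes from the fold, and `σ (j + 1)` is the sign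
of the affine branch of `f` along the ray from `f^[j + 1] c` in direction `σ j`. -/
theorem exists_dir (F : FoldMap f s C) : ∃ r > 0, ∀ c ∈ C, ∃ σ, IsDir f s C r c σ := by
  obtain ⟨r, hr, hfold⟩ := F.fold
  refine ⟨r, hr, fun c hc => ?_⟩
  obtain ⟨σ₀, hσ₀, h0⟩ := hfold c hc
  have hc' := F.sub hc
  have hray := F.ray
  choose! g hg1 hg2 using hray
  let σ : ℕ → ℝ := fun j => Nat.rec σ₀ (fun j a => g (f^[j + 1] c) a) j
  have habs : ∀ j, |σ j| = 1 := by
    intro j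
    induction j with
    | zero => exact hσ₀
    | succ j ih => exact hg1 _ (F.iter_mem (j + 1) hc') _ ih
  refine ⟨σ, habs, h0, fun j t ht h1 h2 => ?_⟩
  rw [hg2 _ (F.iter_mem (j + 1) hc') _ (habs j) t ht h1 h2, Function.iterate_succ_apply' f (j + 1)]

/-- A critical point close to one of the first `T` iterates of a critical point is equal to it, there
being only finitely many such pairs. -/
theorem exists_gap (F : FoldMap f s C) (T : ℕ) : ∃ γ > 0, ∀ y ∈ C, ∀ y' ∈ C, ∀ i ≤ T,
    |y' - f^[i] y| < γ → y' = f^[i] y := by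
  have hfin : (C ×ˢ (C ×ˢ (Iic T : Set ℕ))).Finite := F.fin.prod (F.fin.prod (finite_Iic T))
  let S : Set ℝ := Set.image (fun q : ℝ × ℝ × ℕ => |q.2.1 - f^[q.2.2] q.1|)
    (C ×ˢ (C ×ˢ (Iic T : Set ℕ))) \ {0}
  have hS : S.Finite := (hfin.image _).subset Set.sdiff_subset
  have : ∃ γ > 0, ∀ a ∈ S, γ ≤ a := by
    rcases S.eq_empty_or_nonempty with h | h
    · exact ⟨1, one_pos, by simp [h]⟩
    · obtain ⟨a, ha, hmin⟩ := exists_min_image S id hS h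
      refine ⟨a, ?_, hmin⟩
      obtain ⟨⟨q, -, rfl⟩, h0⟩ := ha
      exact lt_of_le_of_ne (abs_nonneg _) (fun h => h0 h.symm)
  obtain ⟨γ, hγ, hmin⟩ := this
  refine ⟨γ, hγ, fun y hy y' hy' i hi hlt => ?_⟩
  by_contra hne
  have := hmin (|y' - f^[i] y|) ⟨⟨(y, y', i), ⟨hy, hy', hi⟩, rfl⟩, fun h =>
    hne (sub_eq_zero.1 (abs_eq_zero.1 h))⟩
  linarith

end FoldMap

section link
variable {f : ℝ → ℝ} {s : ℝ} {C : Set ℝ} {r c : ℝ} {σ : ℕ → ℝ}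

/-- If no point of `C` lies within `ε` of the orbit of `c` on its `σ`-side, every orbit staying
`ε`-close to that of `c` lies on this side, at a distance growing by the factor `s` in each step. -/
theorem IsDir.follow (F : FoldMap f s C) (D : IsDir f s C r c σ) {ε z : ℝ}
    (hεr : ε ≤ r)
    (hz : z ∈ Icc (0 : ℝ) 1) (J : ℕ)
    (hno : ∀ j < J, ∀ v, 0 ≤ v → v ≤ ε → f^[j + 1] c + σ j * v ∉ C)
    (hzc : ∀ j ≤ J, |f^[j] c - f^[j] z| ≤ ε) :
    f^[J + 1] z = f^[J + 1] c + σ J * (s ^ (J + 1) * |z - c|) := by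
  induction J with
  | zero =>
    have h0 := hzc 0 le_rfl
    simp only [Function.iterate_zero, id_eq] at h0
    rw [abs_sub_comm] at h0
    simpa using D.fold z hz (h0.trans hεr)
  | succ J ih =>
    have e := ih (fun j hj => hno j (by omega)) (fun j hj => hzc j (by omega))
    have hs := F.s_pos
    have ht : 0 ≤ s ^ (J + 1) * |z - c| := by positivity
    have h1 := hzc (J + 1) le_rfl
    rw [e, abs_sub_comm, abs_add_sign_mul_sub (D.abs_eq J) ht] at h1
    have h2 := D.step J _ ht (e ▸ F.iter_mem (J + 1) hz)
      (fun t' h0 h1' => hno J (by omega) t' h0.le (by linarith))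
    rw [Function.iterate_succ_apply' f (J + 1) z, e, h2, pow_succ' s (J + 1), mul_assoc]

theorem nearLinked_of_epsLinked (F : FoldMap f s C) (D : IsDir f s C r c σ)
    {ε y : ℝ} (hεr : ε ≤ r) (hy : y ∈ C) (h : EpsLinkedOn f (Icc (0 : ℝ) 1) ε c y) :
    NearLinked f C σ ε c := by
  obtain ⟨m, hm, z, hz, hzy, hclose⟩ := h
  by_contra hn
  have hno : ∀ j v, 0 ≤ v → v ≤ ε → f^[j + 1] c + σ j * v ∉ C :=
    fun j v h0 h1 h2 => hn ⟨j, v, h0, h1, h2⟩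
  obtain ⟨J, rfl⟩ : ∃ J, m = J + 1 := ⟨m - 1, by omega⟩
  have e := D.follow F hεr hz J (fun j _ => hno j) (fun j hj => hclose j (by omega))
  have hs := F.s_pos
  have ht : 0 ≤ s ^ (J + 1) * |z - c| := by positivity
  have h1 := hclose (J + 1) le_rfl
  rw [e, abs_sub_comm, abs_add_sign_mul_sub (D.abs_eq J) ht] at h1
  apply hno J _ ht h1
  rw [← e, hzy]; exact hy

/-- At the first time `J + 1` at which a point of `C` appears on the side `σ J`, this point is the
image of a point `z` at distance `v / s ^ (J + 1)` from `c`, on whichever side of `c` has room in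
`[0,1]`. -/
theorem epsLinked_of_nearLinked (F : FoldMap f s C) (D : IsDir f s C r c σ) (hc : c ∈ C)
    {ε : ℝ} (hεr : ε ≤ r) (hε2 : ε ≤ 1 / 2) (h : NearLinked f C σ ε c) :
    ∃ y ∈ C, EpsLinkedOn f (Icc (0 : ℝ) 1) ε c y := by
  classical
  have hex : ∃ j, ∃ v, 0 ≤ v ∧ v ≤ ε ∧ f^[j + 1] c + σ j * v ∈ C := h
  let J := Nat.find hex
  obtain ⟨v, hv0, hvε, hvC⟩ := Nat.find_spec hex
  have hmin : ∀ j < J, ∀ v, 0 ≤ v → v ≤ ε → f^[j + 1] c + σ j * v ∉ C :=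
    fun j hj v h0 h1 h2 => Nat.find_min hex hj ⟨v, h0, h1, h2⟩
  have hs := F.one_lt
  have hs0 := F.s_pos
  have hcI := F.sub hc
  set w : ℝ := v / s ^ (J + 1) with hw
  have hw0 : 0 ≤ w := by positivity
  have hwv : w * s ^ (J + 1) = v := by rw [hw]; field_simp
  have hpow : ∀ i, i ≤ J + 1 → s ^ i * w ≤ ε := by
    intro i hi
    calc s ^ i * w ≤ s ^ (J + 1) * w := by gcongr; exact hs.le
      _ ≤ ε := by linarith
  have hw1 : w ≤ ε := by simpa using hpow 0 (by omega)
  obtain ⟨τ, hτ, hzI⟩ : ∃ τ : ℝ, |τ| = 1 ∧ c + τ * w ∈ Icc (0 : ℝ) 1 := by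
    rcases le_total c (1 / 2) with h | h
    · exact ⟨1, by simp, by linarith [hcI.1], by linarith⟩
    · exact ⟨-1, by simp, by linarith, by linarith [hcI.2]⟩
  set z := c + τ * w with hz
  have hzc : |z - c| = w := abs_add_sign_mul_sub hτ hw0 c
  have hclose : ∀ i ≤ J + 1, |f^[i] c - f^[i] z| ≤ ε := by
    intro i hi
    rw [abs_sub_comm]
    refine (F.lip_iter i hzI hcI).trans ?_
    rw [hzc]; exact hpow i hi
  refine ⟨_, hvC, J + 1, by omega, z, hzI, ?_, hclose⟩
  rw [D.follow F hεr hzI J hmin (fun j hj => hclose j (by omega)), hzc, mul_comm _ w, hwv]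

end link

/-! ### Compactness, transitivity and limit shadowing -/

/-- Compactness: closed constraints on the points of an orbit which can be met up to every finite time
can be met for all times. -/
theorem exists_orbit_of_finite {f : ℝ → ℝ}
    (hmaps : MapsTo f (Icc (0 : ℝ) 1) (Icc (0 : ℝ) 1)) (hcont : ContinuousOn f (Icc (0 : ℝ) 1))
    {G : ℕ → Set ℝ} (hG : ∀ n, IsClosed (G n))
    (h : ∀ N, ∃ z ∈ Icc (0 : ℝ) 1, ∀ n ≤ N, f^[n] z ∈ G n) :
    ∃ z ∈ Icc (0 : ℝ) 1, ∀ n, f^[n] z ∈ G n := by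
  choose z hz hzG using h
  obtain ⟨a, ha, φ, hφ, hlim⟩ := isCompact_Icc.tendsto_subseq hz
  refine ⟨a, ha, fun n => ?_⟩
  have hc : ContinuousWithinAt f^[n] (Icc (0 : ℝ) 1) a := (hcont.iterate hmaps n) a ha
  have ht : Tendsto (fun k => f^[n] (z (φ k))) atTop (𝓝 (f^[n] a)) :=
    hc.tendsto.comp (tendsto_nhdsWithin_iff.2 ⟨hlim, Eventually.of_forall fun k => hz _⟩)
  refine (hG n).mem_of_tendsto ht ?_
  filter_upwards [eventually_ge_atTop n] with k hk
  exact hzG _ n (hk.trans (hφ.id_le k))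

/-- Shadowing of all finite initial pieces of pseudo-orbits, by points depending on the length of the
piece. -/
def FiniteShadowing (f : ℝ → ℝ) : Prop :=
  ∀ ε : ℝ, 0 < ε → ∃ δ : ℝ, 0 < δ ∧
    ∀ x : ℕ → ℝ, (∀ n, x n ∈ Icc (0 : ℝ) 1) → (∀ n, dist (f (x n)) (x (n + 1)) < δ) →
      ∀ N, ∃ z ∈ Icc (0 : ℝ) 1, ∀ n ≤ N, dist (f^[n] z) (x n) < ε

theorem FiniteShadowing.shadowing {f : ℝ → ℝ}
    (hmaps : MapsTo f (Icc (0 : ℝ) 1) (Icc (0 : ℝ) 1)) (hcont : ContinuousOn f (Icc (0 : ℝ) 1))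
    (h : FiniteShadowing f) : ShadowingOn f (Icc (0 : ℝ) 1) := by
  intro ε hε
  obtain ⟨δ, hδ, hsh⟩ := h (ε / 2) (by linarith)
  refine ⟨δ, hδ, fun x hx hxδ => ?_⟩
  obtain ⟨z, hz, hzx⟩ := exists_orbit_of_finite hmaps hcont
    (G := fun n => Metric.closedBall (x n) (ε / 2)) (fun n => Metric.isClosed_closedBall)
    (fun N => by
      obtain ⟨z, hz, hzx⟩ := hsh x hx hxδ N
      exact ⟨z, hz, fun n hn => (hzx n hn).le⟩)
  exact ⟨z, hz, fun n => lt_of_le_of_lt (hzx n) (by linarith)⟩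

/-- Concatenation of finite sequences `g k 0, …, g k (l k - 1)` into one sequence. The `k`-th piece starts
at time `n k`; the one-step errors within the `k`-th piece and at its end are at most `e k`. -/
theorem exists_concat {f : ℝ → ℝ} {A : Set ℝ} (g : ℕ → ℕ → ℝ) (l : ℕ → ℕ) (e : ℕ → ℝ)
    (hA : ∀ k j, g k j ∈ A)
    (hl : ∀ k, 1 ≤ l k) (he : Tendsto e atTop (𝓝 0))
    (hin : ∀ k j, j + 1 < l k → dist (f (g k j)) (g k (j + 1)) ≤ e k)
    (hout : ∀ k j, j + 1 = l k → dist (f (g k j)) (g (k + 1) 0) ≤ e k) :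
    ∃ x : ℕ → ℝ, (∀ n, x n ∈ A) ∧
      Tendsto (fun n => dist (f (x n)) (x (n + 1))) atTop (𝓝 0) ∧
      ∃ n : ℕ → ℕ, (∀ k, k ≤ n k) ∧ ∀ k j, j < l k → x (n k + j) = g k j := by
  -- `S n` is the pair (number of the current piece, position in it) at time `n`
  let S : ℕ → ℕ × ℕ := fun n => Nat.rec (0, 0)
    (fun _ q => if q.2 + 1 < l q.1 then (q.1, q.2 + 1) else (q.1 + 1, 0)) n
  have S0 : S 0 = (0, 0) := rfl
  have Ss : ∀ n, S (n + 1) = if (S n).2 + 1 < l (S n).1 then ((S n).1, (S n).2 + 1)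
      else ((S n).1 + 1, 0) := fun n => rfl
  have hinv : ∀ n, (S n).2 < l (S n).1 := by
    intro n
    induction n with
    | zero => rw [S0]; exact hl 0
    | succ n ih =>
      rw [Ss]; split_ifs with h
      · exact h
      · exact hl _
  have hmono : Monotone fun n => (S n).1 := by
    refine monotone_nat_of_le_succ fun n => ?_
    rw [Ss]; split_ifs <;> simp
  have hblock : ∀ n k, S n = (k, 0) → ∀ j, j < l k → S (n + j) = (k, j) := by
    intro n k h j
    induction j with
    | zero => intro _; exact h
    | succ j ih =>
      intro hj
      rw [← add_assoc, Ss, ih (by omega)]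
      simp [hj]
  have hstart : ∀ k, ∃ n, k ≤ n ∧ S n = (k, 0) := by
    intro k
    induction k with
    | zero => exact ⟨0, le_rfl, S0⟩
    | succ k ih =>
      obtain ⟨n, hn, hS⟩ := ih
      have h1 := hl k
      have := hblock n k hS (l k - 1) (by omega)
      refine ⟨n + (l k - 1) + 1, by omega, ?_⟩
      rw [Ss, this]
      have : ¬ (l k - 1 + 1 < l k) := by omega
      simp [this]
  choose n hn hS using hstart
  have htop : Tendsto (fun n => (S n).1) atTop atTop :=
    tendsto_atTop_atTop.2 fun b => ⟨n b, fun a ha => by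
      have := hmono ha
      simp only [hS b] at this
      exact this⟩
  refine ⟨fun n => g (S n).1 (S n).2, fun n => hA _ _, ?_, n, hn, fun k j hj => ?_⟩
  · refine squeeze_zero (fun _ => dist_nonneg) (fun m => ?_) (he.comp htop)
    have h1 := hinv m
    simp only [Ss, Function.comp]
    split_ifs with h
    · exact hin _ _ h
    · exact hout _ _ (by omega)
  · simp only [hblock _ _ (hS k) j hj]

/-- Badly shadowed pieces of pseudo-orbits, with errors tending to zero, are joined by orbit segments
provided by transitivity. A point shadowing the result asymptotically shadows almost all pieces. -/
theorem finiteShadowing_of_limit {f : ℝ → ℝ}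
    (hmaps : MapsTo f (Icc (0 : ℝ) 1) (Icc (0 : ℝ) 1))
    (htrans : TransitiveOn f (Icc (0 : ℝ) 1))
    (hlim : LimitShadowingOn f (Icc (0 : ℝ) 1)) : FiniteShadowing f := by
  intro ε hε
  by_contra hcon
  push Not at hcon
  have hpos : ∀ k : ℕ, (0 : ℝ) < 1 / ((k : ℝ) + 1) := fun k => by positivity
  choose x hx hxδ N hbad using fun k : ℕ => hcon (1 / ((k : ℝ) + 1)) (hpos k)
  have hbridge : ∀ k : ℕ, ∃ n : ℕ, ∃ w ∈ Icc (0 : ℝ) 1,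
      dist w (f (x k (N k))) < 1 / ((k : ℝ) + 1) ∧
      dist (f^[n] w) (x (k + 1) 0) < 1 / ((k : ℝ) + 1) := by
    intro k
    obtain ⟨n, w, hw, hw'⟩ := htrans (Metric.ball (f (x k (N k))) (1 / ((k : ℝ) + 1)))
      (Metric.ball (x (k + 1) 0) (1 / ((k : ℝ) + 1))) Metric.isOpen_ball Metric.isOpen_ball
      ⟨_, Metric.mem_ball_self (hpos k), hmaps (hx _ _)⟩
      ⟨_, Metric.mem_ball_self (hpos k), hx _ _⟩
    exact ⟨n, w, hw.2, hw.1, hw'.1⟩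
  choose n w hw hw1 hw2 using hbridge
  let g : ℕ → ℕ → ℝ := fun k j => if j ≤ N k then x k j else f^[j - N k - 1] (w k)
  have he : Tendsto (fun k : ℕ => 2 * (1 / ((k : ℝ) + 1))) atTop (𝓝 0) := by
    simpa using tendsto_one_div_add_atTop_nhds_zero_nat.const_mul (2 : ℝ)
  obtain ⟨X, hX, hXlim, m, hm, hXm⟩ := exists_concat (f := f) (A := Icc (0 : ℝ) 1) g
    (fun k => N k + 1 + n k) (fun k : ℕ => 2 * (1 / ((k : ℝ) + 1)))
    (fun k j => by
      simp only [g]; split_ifs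
      · exact hx _ _
      · exact hmaps.iterate _ (hw k))
    (fun k => by omega) he
    (fun k j hj => by
      have hp := hpos k
      simp only [g]
      by_cases h1 : j + 1 ≤ N k
      · rw [if_pos h1, if_pos (by omega)]
        linarith [hxδ k j]
      · by_cases h2 : j ≤ N k
        · obtain rfl : j = N k := by omega
          rw [if_pos h2, if_neg h1, show N k + 1 - N k - 1 = 0 by omega, Function.iterate_zero, id,
            dist_comm]
          linarith [hw1 k]
        · rw [if_neg h2, if_neg h1, show j + 1 - N k - 1 = (j - N k - 1) + 1 by omega,
            Function.iterate_succ_apply', dist_self]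
          positivity)
    (fun k j hj => by
      have hp := hpos k
      have h0 : g (k + 1) 0 = x (k + 1) 0 := by simp [g]
      rw [h0]
      simp only [g]
      by_cases h2 : j ≤ N k
      · have hn0 : n k = 0 := by omega
        obtain rfl : j = N k := by omega
        have h3 := hw2 k
        rw [hn0, Function.iterate_zero, id] at h3
        rw [if_pos h2]
        have := dist_triangle_left (f (x k (N k))) (x (k + 1) 0) (w k)
        linarith [hw1 k]
      · rw [if_neg h2, ← Function.iterate_succ_apply' f, show (j - N k - 1).succ = n k by omega]
        linarith [hw2 k])
  obtain ⟨z, hz, hzlim⟩ := hlim X hX hXlim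
  obtain ⟨M, hM⟩ := eventually_atTop.1 (hzlim.eventually (gt_mem_nhds hε))
  obtain ⟨j, hj, hjε⟩ := hbad M (f^[m M] z) (hmaps.iterate _ hz)
  have h1 := hM (m M + j) ((hm M).trans (by omega))
  rw [hXm M j (by omega), add_comm, Function.iterate_add_apply] at h1
  simp only [g, if_pos hj] at h1
  linarith

/-- The image of `f` is closed, so a missed point would have a neighbourhood missed by `f`. -/
theorem surj_of_transitive {f : ℝ → ℝ}
    (hmaps : MapsTo f (Icc (0 : ℝ) 1) (Icc (0 : ℝ) 1)) (hcont : ContinuousOn f (Icc (0 : ℝ) 1))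
    (htrans : TransitiveOn f (Icc (0 : ℝ) 1)) : SurjOn f (Icc (0 : ℝ) 1) (Icc (0 : ℝ) 1) := by
  intro v hv
  by_contra hnot
  have hclosed : IsClosed (f '' Icc (0 : ℝ) 1) := (isCompact_Icc.image_of_continuousOn hcont).isClosed
  have h0 : (0 : ℝ) ∈ Icc (0 : ℝ) 1 := ⟨le_rfl, zero_le_one⟩
  have hne : f 0 ≠ v := fun h => hnot ⟨0, h0, h⟩
  obtain ⟨U, V, hU, hV, hfU, hvV, hd⟩ := t2_separation hne
  obtain ⟨n, x, hx, hx'⟩ := htrans U (V ∩ (f '' Icc (0 : ℝ) 1)ᶜ) hU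
    (hV.inter hclosed.isOpen_compl) ⟨f 0, hfU, hmaps h0⟩ ⟨v, ⟨hvV, hnot⟩, hv⟩
  cases n with
  | zero => exact disjoint_left.1 hd hx.1 hx'.1.1
  | succ n =>
    apply hx'.1.2
    rw [Function.iterate_succ_apply']
    exact ⟨_, hmaps.iterate n hx.2, rfl⟩

theorem limit_of_slimit {f : ℝ → ℝ} (hsurj : SurjOn f (Icc (0 : ℝ) 1) (Icc (0 : ℝ) 1))
    (h : SLimitShadowingOn f (Icc (0 : ℝ) 1)) : LimitShadowingOn f (Icc (0 : ℝ) 1) := by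
  intro x hx hxlim
  obtain ⟨δ, hδ, -, hsh⟩ := h 1 one_pos
  obtain ⟨N, hN⟩ := eventually_atTop.1 (hxlim.eventually (gt_mem_nhds hδ))
  obtain ⟨z, hz, -, hzlim⟩ := hsh (fun n => x (n + N)) (fun n => hx _)
    (fun n => by
      have := hN (n + N) (by omega)
      rwa [add_right_comm] at this)
    (by
      have := (tendsto_add_atTop_iff_nat N).2 hxlim
      refine this.congr fun n => ?_
      rw [add_right_comm])
  obtain ⟨w, hw, hwz⟩ := hsurj.iterate N hz
  refine ⟨w, hw, (tendsto_add_atTop_iff_nat N).1 (hzlim.congr fun n => ?_)⟩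
  rw [Function.iterate_add_apply, hwz]

/-! ### Shadowing implies linking -/

theorem exists_uniform_of_finite {C : Set ℝ} (hC : C.Finite) {P : ℝ → ℝ → Prop}
    (hmono : ∀ y ρ ρ', ρ' ≤ ρ → P y ρ → P y ρ') (h : ∀ y ∈ C, ∃ ρ > 0, P y ρ) :
    ∃ ρ > 0, ∀ y ∈ C, P y ρ := by
  choose! g hg hP using h
  rcases C.eq_empty_or_nonempty with rfl | hne
  · exact ⟨1, one_pos, by simp⟩
  · obtain ⟨a, ha, hmin⟩ := exists_min_image C g hC hne
    exact ⟨g a, hg a ha, fun y hy => hmono y _ _ (hmin y hy) (hP y hy)⟩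

theorem not_pow_bounded {s a b : ℝ} (hs : 1 < s) (ha : 0 < a) (h : ∀ n : ℕ, s ^ n * a ≤ b) :
    False := by
  obtain ⟨n, hn⟩ := pow_unbounded_of_one_lt (b / a) hs
  rw [div_lt_iff₀ ha] at hn
  linarith [h n]

namespace FoldMap
variable {f : ℝ → ℝ} {s : ℝ} {C : Set ℝ}

/-- Along a segment extending from `u` to both sides, with no point of `C` in its interior, `f` is
affine with slope `±s`. -/
theorem affine (F : FoldMap f s C) {u τ a b : ℝ} (hτ : |τ| = 1)
    (ha : 0 ≤ a) (hb : 0 ≤ b)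
    (hua : u + τ * (-a) ∈ Icc (0 : ℝ) 1) (hub : u + τ * b ∈ Icc (0 : ℝ) 1)
    (hno : ∀ t, -a < t → t < b → u + τ * t ∉ C) :
    ∃ σ : ℝ, |σ| = 1 ∧ ∀ t, -a ≤ t → t ≤ b → f (u + τ * t) = f u + σ * (s * t) := by
  obtain ⟨σ, hσ, h⟩ := F.ray _ hua τ hτ
  have key : ∀ t, -a ≤ t → t ≤ b →
      f (u + τ * t) = f (u + τ * (-a)) + σ * (s * (t + a)) := by
    intro t h1 h2
    have e : u + τ * t = u + τ * (-a) + τ * (t + a) := by ring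
    rw [e]
    refine h _ (by linarith) ?_ (fun t' h3 h4 => ?_)
    · rw [← e]
      rcases abs_one_cases hτ with rfl | rfl
      · exact ⟨by linarith [hua.1], by linarith [hub.2]⟩
      · exact ⟨by linarith [hub.1], by linarith [hua.2]⟩
    · have e' : u + τ * (-a) + τ * t' = u + τ * (t' - a) := by ring
      rw [e']
      exact hno _ (by linarith) (by linarith)
  refine ⟨σ, hσ, fun t h1 h2 => ?_⟩
  have h0 := key 0 (by linarith) hb
  rw [mul_zero, add_zero] at h0
  rw [key t h1 h2, h0]
  ring

end FoldMap

section
variable {f : ℝ → ℝ} {s : ℝ} {C : Set ℝ} {r c : ℝ} {σ : ℕ → ℝ}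

/-- The orbit of `c` cannot stay away from `C`. Otherwise the pseudo-orbit `c, w, f w, …`, with `w` near
`f c` on the side opposite to `σ 0`, is not shadowed: a shadowing point `z` has `f z` on the side `σ 0`,
and the two orbits are driven apart. -/
theorem away_case (F : FoldMap f s C) (D : IsDir f s C r c σ) (hc : c ∈ C)
    (hsh : ShadowingOn f (Icc (0 : ℝ) 1)) {ρ : ℝ} (hρ : 0 < ρ) (hρr : ρ ≤ r)
    (haway : ∀ j, ∀ y ∈ C, ρ ≤ |f^[j + 1] c - y|) : False := by
  have hs := F.one_lt
  have hs0 := F.s_pos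
  have hcI := F.sub hc
  have hball : ∀ j v, |v| ≤ ρ → f^[j + 1] c + v ∈ Icc (0 : ℝ) 1 := by
    intro j v hv
    have hm := F.iter_mem (j + 1) hcI
    have h0 := haway j 0 F.zero_mem
    have h1 := haway j 1 F.one_mem
    rw [sub_zero, abs_of_nonneg hm.1] at h0
    rw [abs_sub_comm, abs_of_nonneg (by linarith [hm.2])] at h1
    obtain ⟨h2, h3⟩ := abs_le.1 hv
    exact ⟨by linarith, by linarith⟩
  obtain ⟨δ, hδ, hδsh⟩ := hsh ρ hρ
  set η := min (δ / 2) ρ with hη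
  have hη0 : 0 < η := by positivity
  have hηρ : η ≤ ρ := min_le_right _ _
  have hηδ : η < δ := lt_of_le_of_lt (min_le_left _ _) (by linarith)
  have habs : |σ 0 * (-η)| = η := by rw [abs_mul, D.abs_eq, one_mul, abs_neg, abs_of_pos hη0]
  set w := f c + σ 0 * (-η) with hw
  have hwI : w ∈ Icc (0 : ℝ) 1 := hball 0 (σ 0 * (-η)) (by rw [habs]; exact hηρ)
  obtain ⟨z, hz, hzx⟩ := hδsh (fun n => Nat.casesOn n c (fun i => f^[i] w))
    (fun n => by
      cases n with
      | zero => exact hcI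
      | succ i => exact F.iter_mem i hwI)
    (fun n => by
      cases n with
      | zero =>
        change dist (f c) w < δ
        rw [Real.dist_eq, abs_sub_comm, hw, add_sub_cancel_left, habs]
        exact hηδ
      | succ i =>
        change dist (f (f^[i] w)) (f^[i + 1] w) < δ
        rw [Function.iterate_succ_apply', dist_self]
        exact hδ)
  have hz0 : |z - c| < ρ := hzx 0
  have hzs : ∀ i, |f^[i + 1] z - f^[i] w| < ρ := fun i => hzx (i + 1)
  set b := s * |z - c| with hb
  have hb0 : 0 ≤ b := by positivity
  have key : ∀ i, ∃ τ : ℝ, |τ| = 1 ∧ f^[i] w = f^[i + 1] c + τ * (-(s ^ i * η)) ∧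
      f^[i + 1] z = f^[i + 1] c + τ * (s ^ i * b) := by
    intro i
    induction i with
    | zero =>
      refine ⟨σ 0, D.abs_eq 0, by simp [hw], ?_⟩
      simpa using D.fold z hz (hz0.le.trans hρr)
    | succ i ih =>
      obtain ⟨τ, hτ, e1, e2⟩ := ih
      have hd := hzs i
      have h1 : 0 ≤ s ^ i * η := by positivity
      have h2 : 0 ≤ s ^ i * b := by positivity
      rw [e1, e2, show f^[i + 1] c + τ * (s ^ i * b) - (f^[i + 1] c + τ * (-(s ^ i * η)))
        = τ * (s ^ i * b + s ^ i * η) by ring, abs_mul, hτ, one_mul, abs_of_nonneg (by linarith)]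
        at hd
      obtain ⟨τ', hτ', haff⟩ := F.affine hτ hρ.le hρ.le
        (hball i _ (by rw [abs_mul, hτ, one_mul, abs_neg, abs_of_pos hρ]))
        (hball i _ (by rw [abs_mul, hτ, one_mul, abs_of_pos hρ]))
        (fun t h3 h4 h5 => by
          have := haway i _ h5
          rw [abs_sub_comm, add_sub_cancel_left, abs_mul, hτ, one_mul] at this
          exact absurd (abs_lt.2 ⟨h3, h4⟩) (not_lt.2 this))
      refine ⟨τ', hτ', ?_, ?_⟩
      · rw [Function.iterate_succ_apply', e1, haff _ (by linarith) (by linarith),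
          ← Function.iterate_succ_apply' f]
        ring
      · rw [Function.iterate_succ_apply', e2, haff _ (by linarith) (by linarith),
          ← Function.iterate_succ_apply' f]
        ring
  refine not_pow_bounded hs hη0 (b := ρ) fun i => ?_
  obtain ⟨τ, hτ, e1, e2⟩ := key i
  have hd := hzs i
  have h1 : 0 ≤ s ^ i * η := by positivity
  have h2 : 0 ≤ s ^ i * b := by positivity
  rw [e1, e2, show f^[i + 1] c + τ * (s ^ i * b) - (f^[i + 1] c + τ * (-(s ^ i * η)))
    = τ * (s ^ i * b + s ^ i * η) by ring, abs_mul, hτ, one_mul, abs_of_nonneg (by linarith)] at hd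
  linarith

/-- If the orbit of `c` avoids `C` on its `σ`-side up to distance `ε` but accumulates at `y ∈ C`, orbits
starting near `y` depart exponentially from the orbit of `y`, as long as they stay `ε / 2`-close. -/
theorem expand_near (F : FoldMap f s C) (hr : ∀ c ∈ C, ∃ σ, IsDir f s C r c σ)
    (D : IsDir f s C r c σ) (hc : c ∈ C) {ε : ℝ} (hεr : ε ≤ r)
    (hno : ∀ j v, 0 ≤ v → v ≤ ε → f^[j + 1] c + σ j * v ∉ C)
    {y : ℝ} (hy : y ∈ C) (hacc : ∀ ρ > 0, ∃ j, |f^[j + 1] c - y| < ρ)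
    {z : ℝ} (hz : z ∈ Icc (0 : ℝ) 1) (hzy : z ≠ y) (m : ℕ)
    (hclose : ∀ i ≤ m, |f^[i] z - f^[i] y| ≤ ε / 2) :
    s ^ m * (|z - y| / 2) ≤ |f^[m] z - f^[m] y| := by
  have hs := F.one_lt
  have hs0 := F.s_pos
  have hcI := F.sub hc
  have hyI := F.sub hy
  set a := |z - y| with ha
  have ha0 : 0 < a := abs_pos.2 (sub_ne_zero.2 hzy)
  have haε : a ≤ ε / 2 := by simpa using hclose 0 (by omega)
  have hε : 0 < ε := by linarith
  have hsm : 0 < s ^ m := by positivity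
  obtain ⟨j, hj⟩ := hacc (min (a / 4) (ε / 2 / s ^ m)) (by positivity)
  set e := |f^[j + 1] c - y| with he
  have hea : e < a / 4 := hj.trans_le (min_le_left _ _)
  have hem : s ^ m * e < ε / 2 := by
    have := hj.trans_le (min_le_right _ _)
    rw [lt_div_iff₀ hsm] at this; linarith
  have he0 : 0 ≤ e := abs_nonneg _
  set u := f^[j + 1] c with hu
  have huI : u ∈ Icc (0 : ℝ) 1 := F.iter_mem (j + 1) hcI
  have hye : y = u + σ j * (-e) := by
    have h1 : y = u + e ∨ y = u - e := by
      rcases le_total u y with h | h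
      · left; rw [he, abs_of_nonpos (by linarith)]; ring
      · right; rw [he, abs_of_nonneg (by linarith)]; ring
    have h2 : y ≠ u + σ j * e := fun h => hno j e he0 (by linarith) (h ▸ hy)
    rcases abs_one_cases (D.abs_eq j) with h3 | h3 <;> rw [h3] at h2 ⊢ <;>
      rcases h1 with h1 | h1
    · exact absurd (by linarith) h2
    · linarith
    · linarith
    · exact absurd (by linarith) h2
  -- `z'` is at the same distance from `y` as `z`, and on the `σ`-side of `u`, which is free of `C`.
  -- The fold at `y` identifies `z` with `z'`.
  set z' := u + σ j * (a - e) with hz'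
  have hz'I : z' ∈ Icc (0 : ℝ) 1 := F.mem_of_no_crit huI (D.abs_eq j)
    (fun t h1 h2 => hno j t h1 (by linarith)) (by linarith)
  have hz'y : |z' - y| = a := by
    rw [hz', hye, show u + σ j * (a - e) - (u + σ j * -e) = σ j * a by ring, abs_mul, D.abs_eq,
      one_mul, abs_of_pos ha0]
  have hff : f z' = f z := by
    obtain ⟨τ, Dy⟩ := hr y hy
    rw [Dy.fold z' hz'I (by linarith), Dy.fold z hz (by linarith), hz'y]
  have hfi : ∀ i, 1 ≤ i → f^[i] z' = f^[i] z := by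
    intro i hi
    obtain ⟨i, rfl⟩ : ∃ i', i = i' + 1 := ⟨i - 1, by omega⟩
    rw [Function.iterate_succ_apply, Function.iterate_succ_apply, hff]
  have hyc : ∀ i ≤ m, |f^[i] y - f^[j + i + 1] c| ≤ s ^ m * e := by
    intro i hi
    have h1 := F.lip_iter i hyI huI
    rw [hu, ← Function.iterate_add_apply, ← hu, show i + (j + 1) = j + i + 1 by omega,
      abs_sub_comm y u] at h1
    exact h1.trans (by gcongr; exact hs.le)
  have key : ∀ i ≤ m, f^[i] z' = f^[j + i + 1] c + σ (j + i) * (s ^ i * (a - e)) := by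
    intro i
    induction i with
    | zero => intro _; simp [hz', hu]
    | succ i ih =>
      intro hi
      have e1 := ih (by omega)
      have ht : 0 ≤ s ^ i * (a - e) := mul_nonneg (pow_nonneg hs0.le i) (by linarith)
      have hle : s ^ i * (a - e) ≤ ε := by
        rcases Nat.eq_zero_or_pos i with rfl | hpos
        · rw [pow_zero]; linarith
        · have h1 := hclose i (by omega)
          have h2 := hyc i (by omega)
          rw [← hfi i hpos] at h1
          have h3 := abs_add_sign_mul_sub (D.abs_eq (j + i)) ht (f^[j + i + 1] c)
          rw [← e1] at h3
          have := abs_sub_le (f^[i] z') (f^[i] y) (f^[j + i + 1] c)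
          linarith
      rw [Function.iterate_succ_apply', e1, D.step (j + i) _ ht (e1 ▸ F.iter_mem i hz'I)
        (fun t' h1 h2 => hno _ t' h1.le (by linarith))]
      rw [show j + (i + 1) + 1 = j + i + 2 by omega, show j + (i + 1) = j + i + 1 by omega]
      ring
  rcases Nat.eq_zero_or_pos m with rfl | hpos
  · simp only [pow_zero, one_mul, Function.iterate_zero, id]; linarith
  · have ht : 0 ≤ s ^ m * (a - e) := mul_nonneg (pow_nonneg hs0.le m) (by linarith)
    have e1 := key m le_rfl
    have h3 := abs_add_sign_mul_sub (D.abs_eq (j + m)) ht (f^[j + m + 1] c)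
    rw [← e1, hfi m hpos] at h3
    have h2 := hyc m le_rfl
    have := abs_sub_le (f^[m] z) (f^[m] y) (f^[j + m + 1] c)
    have h5 : s ^ m * e ≤ s ^ m * (a / 4) := by gcongr
    nlinarith

/-- If the orbit of `c` accumulates at some `y ∈ C` without being linked to it, the pseudo-orbit which jumps
from the orbit of `c` to that of `y` is not shadowed: by `IsDir.follow` a shadowing orbit would be on
the `σ`-side of `c` at the time of the jump, hence not at `y`, and `expand_near` applies. -/
theorem nearLinked_of_shadowing (F : FoldMap f s C) (hr : ∀ c ∈ C, ∃ σ, IsDir f s C r c σ)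
    (hr0 : 0 < r) (D : IsDir f s C r c σ) (hc : c ∈ C) (hsh : ShadowingOn f (Icc (0 : ℝ) 1))
    {ε : ℝ} (hε : 0 < ε) (hεr : ε ≤ r) : NearLinked f C σ ε c := by
  by_contra hn
  have hno : ∀ j v, 0 ≤ v → v ≤ ε → f^[j + 1] c + σ j * v ∉ C :=
    fun j v h0 h1 h2 => hn ⟨j, v, h0, h1, h2⟩
  have hcI := F.sub hc
  by_cases hcase : ∀ y ∈ C, ∃ ρ > 0, ∀ j, ρ ≤ |f^[j + 1] c - y|
  · obtain ⟨ρ, hρ, h⟩ := exists_uniform_of_finite F.fin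
      (fun y ρ ρ' hle h j => hle.trans (h j)) hcase
    exact away_case F D hc hsh (lt_min hρ hr0) (min_le_right _ _)
      (fun j y hy => (min_le_left _ _).trans (h y hy j))
  · push Not at hcase
    obtain ⟨y, hy, hacc⟩ := hcase
    have hyI := F.sub hy
    obtain ⟨δ, hδ, hδsh⟩ := hsh (ε / 2) (by linarith)
    obtain ⟨j, hj⟩ := hacc (min δ ε) (lt_min hδ hε)
    obtain ⟨z, hz, hzx⟩ := hδsh (fun n => if n ≤ j then f^[n] c else f^[n - (j + 1)] y)
      (fun n => by
        split_ifs
        · exact F.iter_mem _ hcI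
        · exact F.iter_mem _ hyI)
      (fun n => by
        rcases lt_trichotomy n j with h | h | h
        · rw [if_pos (by omega), if_pos (by omega), Function.iterate_succ_apply', dist_self]
          exact hδ
        · subst h
          rw [if_pos le_rfl, if_neg (by omega), Nat.sub_self, ← Function.iterate_succ_apply' f]
          exact hj.trans_le (min_le_left _ _)
        · rw [if_neg (by omega), if_neg (by omega),
            show n + 1 - (j + 1) = n - (j + 1) + 1 by omega, Function.iterate_succ_apply', dist_self]
          exact hδ)
    have e := D.follow F hεr hz j (fun j _ => hno j) (fun i hi => by
      have := hzx i
      simp only [if_pos hi] at this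
      rw [dist_comm, Real.dist_eq] at this
      linarith)
    set z' := f^[j + 1] z with hz'
    have hs0 := F.s_pos
    have ht : 0 ≤ s ^ (j + 1) * |z - c| := by positivity
    have hne : z' ≠ y := by
      intro h
      have h1 := abs_add_sign_mul_sub (D.abs_eq j) ht (f^[j + 1] c)
      rw [← e, h, abs_sub_comm] at h1
      refine hno j _ ht ?_ (by rw [← e, h]; exact hy)
      rw [← h1]
      exact (hj.trans_le (min_le_right _ _)).le
    have hcl : ∀ i, |f^[i] z' - f^[i] y| ≤ ε / 2 := by
      intro i
      have := hzx (i + (j + 1))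
      rw [if_neg (by omega), Nat.add_sub_cancel, Function.iterate_add_apply] at this
      exact this.le
    refine not_pow_bounded F.one_lt (a := |z' - y| / 2) (b := ε / 2)
      (by have := abs_pos.2 (sub_ne_zero.2 hne); linarith) fun m => ?_
    exact (expand_near F hr D hc hεr hno hy hacc (F.iter_mem _ hz) hne m (fun i _ => hcl i)).trans
      (hcl m)

end

theorem linking_of_shadowing {f : ℝ → ℝ} {s : ℝ} (F : FoldMap f s (Crit f))
    (hsh : ShadowingOn f (Icc (0 : ℝ) 1)) : LinkingProperty f := by
  obtain ⟨r, hr0, hr⟩ := F.exists_dir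
  intro c hc
  obtain ⟨σ, D⟩ := hr c hc
  by_contra hcon
  push Not at hcon
  obtain ⟨ρ, hρ, h⟩ := exists_uniform_of_finite (C := Crit f)
    (P := fun y ρ => ¬ EpsLinkedOn f (Icc (0 : ℝ) 1) ρ c y) F.fin
    (fun y ρ ρ' hle h h' => h (by
      obtain ⟨m, hm, z, hz, hzy, hcl⟩ := h'
      exact ⟨m, hm, z, hz, hzy, fun j hj => (hcl j hj).trans hle⟩))
    (fun y hy => by
      have := hcon y hy
      unfold LinkedOn at this
      push Not at this
      exact this)
  have hε : 0 < min ρ (min r (1 / 2)) := by positivity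
  have hle1 : min ρ (min r (1 / 2)) ≤ r := (min_le_right _ _).trans (min_le_left _ _)
  have hle2 : min ρ (min r (1 / 2)) ≤ 1 / 2 := (min_le_right _ _).trans (min_le_right _ _)
  obtain ⟨y, hy, m, hm, z, hz, hzy, hcl⟩ := epsLinked_of_nearLinked F D hc hle1 hle2
    (nearLinked_of_shadowing F hr hr0 D hc hsh hε hle1)
  exact h y hy ⟨m, hm, z, hz, hzy, fun j hj => (hcl j hj).trans (min_le_left _ _)⟩

/-! ### Scales, transitions and lengths -/

/-- A compatible choice of small lengths. `δ` bounds the errors of the pseudo-orbit; `κ` is the distance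
at which it counts as close to `C`, and the width kept on the short side of a segment; `E` is the
range within which linking finds a critical point; `L` is the length a segment needs for passing a
critical point. Segments may grow by the factor `q` at each step, which takes `T` steps from `κ` to
`L`. `E_gap` and `E_low` absorb the errors made near a critical point, `exit` says that a one-sided
segment of length `L - E` at a critical point has an image of length at least `L + 2 * s * E`, and
`gap` separates the critical orbits of length `T`. In `link` the time `j` is bounded in terms of `δ`,
so that errors do not accumulate beyond `κ` until the next critical point is met. -/
structure Scale (f : ℝ → ℝ) (s : ℝ) (C : Set ℝ) (r : ℝ) (σ : ℝ → ℕ → ℝ) (q : ℝ) (T : ℕ)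
    (κ δ E L : ℝ) : Prop where
  κ_pos : 0 < κ
  δ_pos : 0 < δ
  δ_le : δ ≤ κ
  δ_le' : δ ≤ (s - q) * κ
  one_lt : 1 < q
  lt : q < s
  E_low : (2 * s + 1) * κ ≤ E
  E_gap : E + κ < q * (E - κ)
  E_le : E ≤ L
  L_eq : L = κ * q ^ T
  exit : L + 2 * s * E ≤ s * (L - E)
  gap : ∀ y ∈ C, ∀ y' ∈ C, ∀ i ≤ T, |y' - f^[i] y| < 6 * L * (s + 1) ^ T → y' = f^[i] y
  L_r : 3 * L ≤ r
  L_half : L ≤ 1 / 2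
  link : ∀ c ∈ C, ∃ j, δ * (s + 1) ^ j ≤ κ ∧ ∃ v, 0 ≤ v ∧ v ≤ E ∧ f^[j + 1] c + σ c j * v ∈ C

/-- Transition: every point of `B` is the image under `f^[p]` of a point of `A` whose orbit stays
`ρ`-close to `x` from time `n` to time `n + p - 1`. -/
def Tr (f : ℝ → ℝ) (x : ℕ → ℝ) (ρ : ℝ) (n p : ℕ) (A B : Set ℝ) : Prop :=
  ∀ b ∈ B, ∃ a ∈ A, f^[p] a = b ∧ ∀ j < p, |f^[j] a - x (n + j)| ≤ ρ

/-- The segment of the points `u + τ * t` with `a ≤ t ≤ b`; here `τ = ±1` is its direction. -/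
def Seg (u τ a b : ℝ) : Set ℝ := {v | ∃ t, a ≤ t ∧ t ≤ b ∧ v = u + τ * t}

theorem Seg.mono {u τ a b a' b' : ℝ} (ha : a ≤ a') (hb : b' ≤ b) : Seg u τ a' b' ⊆ Seg u τ a b := by
  rintro v ⟨t, h1, h2, rfl⟩
  exact ⟨t, by linarith, by linarith, rfl⟩

namespace Tr
variable {f : ℝ → ℝ} {x : ℕ → ℝ} {ρ : ℝ} {n p q : ℕ} {A B D : Set ℝ}

theorem zero (h : B ⊆ A) : Tr f x ρ n 0 A B := fun b hb => ⟨b, h hb, rfl, by simp⟩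

theorem mono (h : Tr f x ρ n p A B) (hD : D ⊆ B) : Tr f x ρ n p A D := fun b hb => h b (hD hb)

theorem trans (h : Tr f x ρ n p A B) (h' : Tr f x ρ (n + p) q B D) : Tr f x ρ n (p + q) A D := by
  intro d hd
  obtain ⟨b, hb, rfl, hb'⟩ := h' d hd
  obtain ⟨a, ha, rfl, ha'⟩ := h b hb
  refine ⟨a, ha, by rw [add_comm, Function.iterate_add_apply], fun j hj => ?_⟩
  rcases lt_or_ge j p with h1 | h1
  · exact ha' j h1
  · have := hb' (j - p) (by omega)
    rwa [← Function.iterate_add_apply, show j - p + p = j by omega,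
      show n + p + (j - p) = n + j by omega] at this

theorem one (h : ∀ b ∈ B, ∃ a ∈ A, f a = b ∧ |a - x n| ≤ ρ) : Tr f x ρ n 1 A B := by
  intro b hb
  obtain ⟨a, ha, e, h1⟩ := h b hb
  refine ⟨a, ha, e, fun j hj => ?_⟩
  obtain rfl : j = 0 := by omega
  exact h1

end Tr

/-- An admissible length function: `l j`, between `κ` and `L`, is the length of the segment at time `j`,
and grows at most by the factor `q` at each step. Up to time `b` it exceeds `κ` only if the
pseudo-orbit comes `e`-close to `C` within the next `T` steps. -/
structure Len (x : ℕ → ℝ) (C : Set ℝ) (q : ℝ) (T : ℕ) (κ L e : ℝ) (l : ℕ → ℝ) (b : ℕ) : Prop where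
  low : ∀ j, κ ≤ l j
  high : ∀ j, l j ≤ L
  step : ∀ j, l (j + 1) ≤ q * l j
  event : ∀ j < b, l j = κ ∨ ∃ i, 1 ≤ i ∧ i ≤ T ∧ ∃ y ∈ C, |x (j + i) - y| ≤ e

section
variable {f : ℝ → ℝ} {s : ℝ} {C : Set ℝ} {r : ℝ} {σ : ℝ → ℕ → ℝ} {q : ℝ} {T : ℕ}
  {κ δ E L : ℝ} {x : ℕ → ℝ}

theorem Scale.L_pos (S : Scale f s C r σ q T κ δ E L) : 0 < L := by
  rw [S.L_eq]
  exact mul_pos S.κ_pos (pow_pos (zero_lt_one.trans S.one_lt) _)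

theorem Scale.len_const (S : Scale f s C r σ q T κ δ E L) (e : ℝ) (b : ℕ) :
    Len x C q T κ L e (fun _ => κ) b where
  low _ := le_rfl
  high _ := by
    rw [S.L_eq]
    exact le_mul_of_one_le_right S.κ_pos.le (one_le_pow₀ S.one_lt.le)
  step _ := by nlinarith [S.κ_pos, S.one_lt]
  event _ _ := Or.inl rfl

/-- The length function growing from `κ` to `L` during the `T` steps before an encounter with `C` at time
`m`. Truncated subtraction makes it equal to `κ` until time `m - T` and to `L` from time `m` on. -/
theorem Scale.len_event (S : Scale f s C r σ q T κ δ E L) {e y : ℝ} {m : ℕ} (hy : y ∈ C)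
    (hm : |x m - y| ≤ e) :
    Len x C q T κ L e (fun j => κ * q ^ (T - (m - j))) m where
  low _ := le_mul_of_one_le_right S.κ_pos.le (one_le_pow₀ S.one_lt.le)
  high j := by
    rw [S.L_eq]
    exact mul_le_mul_of_nonneg_left (pow_le_pow_right₀ S.one_lt.le (by omega)) S.κ_pos.le
  step j := by
    have h1 : q ^ (T - (m - (j + 1))) ≤ q ^ (T - (m - j) + 1) :=
      pow_le_pow_right₀ S.one_lt.le (by omega)
    have := mul_le_mul_of_nonneg_left h1 S.κ_pos.le
    rw [pow_succ] at this
    linarith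
  event j hj := by
    rcases le_or_gt T (m - j) with h | h
    · left; rw [Nat.sub_eq_zero_of_le h, pow_zero, mul_one]
    · exact Or.inr ⟨m - j, by omega, by omega, y, hy, by rwa [show j + (m - j) = m by omega]⟩

/-- A pseudo-orbit at distance at least `θ ≥ κ` from a nearby critical point `y'` has distance at least
`q * θ` from all of `C` during the next `T` steps: it departs from the orbit of `y'` at rate `q`, and by
`gap` no other critical point is close to that orbit. -/
theorem Scale.away (S : Scale f s C r σ q T κ δ E L) (F : FoldMap f s C)
    (hx : ∀ n, x n ∈ Icc (0 : ℝ) 1) {j : ℕ} (herr : ∀ n, j ≤ n → |f (x n) - x (n + 1)| ≤ δ)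
    {y' θ : ℝ} (hy' : y' ∈ C) (hκθ : κ ≤ θ) (hθ : θ ≤ |x j - y'|) (hL : |x j - y'| ≤ 3 * L)
    {i : ℕ} (hi1 : 1 ≤ i) (hiT : i ≤ T) {y : ℝ} (hy : y ∈ C) : q * θ ≤ |x (j + i) - y| := by
  have hs := F.one_lt
  have hκ := S.κ_pos
  have hq := S.one_lt
  have hLp := S.L_pos
  have hy'I := F.sub hy'
  have key : ∀ i ≤ T, q ^ i * θ ≤ |x (j + i) - f^[i] y'| ∧
      |x (j + i) - f^[i] y'| ≤ (s + 1) ^ i * (3 * L) := by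
    intro i
    induction i with
    | zero => intro _; simpa using ⟨hθ, hL⟩
    | succ i ih =>
      intro hi
      obtain ⟨h1, h2⟩ := ih (by omega)
      set u := f^[i] y' with hu
      set d := |x (j + i) - u| with hd
      have hdκ : κ ≤ d := by
        have : 1 * θ ≤ q ^ i * θ :=
          mul_le_mul_of_nonneg_right (one_le_pow₀ hq.le) (by linarith)
        linarith
      obtain ⟨τ, hτ, hxu⟩ := exists_sign u (x (j + i))
      rw [← hd] at hxu
      have huI : u ∈ Icc (0 : ℝ) 1 := F.iter_mem i hy'I
      obtain ⟨τ', hτ', hray⟩ := F.ray u huI τ hτ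
      have hf := hray d (by linarith) (hxu ▸ hx _) (fun t h3 h4 h5 => by
        have h6 := S.gap y' hy' _ h5 i (by omega) (by
          rw [← hu, abs_add_sign_mul_sub hτ h3.le]
          have h7 : (s + 1) ^ i * (3 * L) ≤ (s + 1) ^ T * (3 * L) := by
            gcongr
            · linarith
            · omega
          have h8 : 0 < (s + 1) ^ T * L := by positivity
          nlinarith)
        rw [← hu] at h6
        have h7 := abs_add_sign_mul_sub hτ h3.le u
        rw [h6, sub_self, abs_zero] at h7
        linarith)
      rw [← hxu] at hf
      have h3 : |f (x (j + i)) - f u| = s * d := by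
        rw [hf]; exact abs_add_sign_mul_sub hτ' (by nlinarith) _
      have h4 := herr (j + i) (by omega)
      have h5 := abs_sub_le (f (x (j + i))) (x (j + i + 1)) (f u)
      have h6 := abs_sub_le (x (j + i + 1)) (f (x (j + i))) (f u)
      rw [abs_sub_comm (x (j + i + 1)) (f (x (j + i)))] at h6
      rw [Function.iterate_succ_apply', ← hu, ← add_assoc, pow_succ, pow_succ]
      have h7 := S.δ_le'
      have h8 := S.δ_le
      have h9 := S.lt
      constructor
      · have : q * (q ^ i * θ) ≤ q * d := by gcongr
        nlinarith
      · have : (s + 1) * d ≤ (s + 1) * ((s + 1) ^ i * (3 * L)) := by gcongr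
        nlinarith
  obtain ⟨h1, h2⟩ := key i hiT
  by_contra hlt
  push Not at hlt
  have h3 : q * θ ≤ q ^ i * θ := by
    have : q ^ 1 ≤ q ^ i := pow_le_pow_right₀ hq.le hi1
    rw [pow_one] at this
    have : 0 ≤ θ := by linarith
    gcongr
  have h7 : (s + 1) ^ i * (3 * L) ≤ (s + 1) ^ T * (3 * L) := by
    gcongr
    linarith
  have h4 := S.gap y' hy' y hy i hiT (by
    have := abs_sub_le y (x (j + i)) (f^[i] y')
    rw [abs_sub_comm y (x (j + i))] at this
    linarith)
  rw [← h4] at h1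
  linarith

/-- One step away from `C`: if no critical point is within `l` of `x j`, then `f` is affine on the
segment around `x j`, and its expansion covers both the error `δ` and the growth from `l` to `l'`. -/
theorem Scale.step_free (S : Scale f s C r σ q T κ δ E L) (F : FoldMap f s C)
    (hx : ∀ n, x n ∈ Icc (0 : ℝ) 1) {j : ℕ} (herr : |f (x j) - x (j + 1)| ≤ δ)
    {τ l l' : ℝ} (hτ : |τ| = 1) (hl : κ ≤ l) (hlL : l ≤ L) (hll : l' ≤ q * l) (hl' : κ ≤ l')
    (hfree : ∀ y ∈ C, l < |x j - y|) :
    ∃ τ', |τ'| = 1 ∧ x (j + 1) + τ' * l' ∈ Icc (0 : ℝ) 1 ∧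
      Tr f x (3 * L) j 1 (Seg (x j) τ (-κ) l ∩ Icc 0 1) (Seg (x (j + 1)) τ' (-κ) l' ∩ Icc 0 1) := by
  have hs := F.one_lt
  have hκ := S.κ_pos
  have hxj := hx j
  have h0 := hfree 0 F.zero_mem
  have h1 := hfree 1 F.one_mem
  rw [sub_zero, abs_of_nonneg hxj.1] at h0
  rw [abs_sub_comm, abs_of_nonneg (by linarith [hxj.2])] at h1
  have hin : ∀ t, -l ≤ t → t ≤ l → x j + τ * t ∈ Icc (0 : ℝ) 1 := by
    intro t h2 h3
    rcases abs_one_cases hτ with rfl | rfl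
    · exact ⟨by linarith, by linarith⟩
    · exact ⟨by linarith, by linarith⟩
  obtain ⟨τ', hτ', haff⟩ := F.affine hτ (a := l) (b := l) (by linarith) (by linarith)
    (hin _ le_rfl (by linarith)) (hin _ (by linarith) le_rfl) (fun t h2 h3 h4 => by
      have := hfree _ h4
      rw [abs_sub_comm, add_sub_cancel_left, abs_mul, hτ, one_mul] at this
      linarith [abs_lt.2 ⟨h2, h3⟩])
  have hee : |τ' * (x (j + 1) - f (x j))| ≤ δ := by
    rw [abs_mul, hτ', one_mul, abs_sub_comm]; exact herr
  set e := τ' * (x (j + 1) - f (x j)) with he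
  obtain ⟨he1, he2⟩ := abs_le.1 hee
  have hsq := sign_sq_of_abs_one hτ'
  have hxe : x (j + 1) = f (x j) + τ' * e := by
    rw [he, ← mul_assoc, hsq]; ring
  have hδ' := S.δ_le'
  have hq := S.lt
  have hq1 := S.one_lt
  have hpre : ∀ t, -κ ≤ t → t ≤ l' → ∃ t', -κ ≤ t' ∧ t' ≤ l ∧
      f (x j + τ * t') = x (j + 1) + τ' * t := by
    intro t h2 h3
    have hs0 : 0 < s := by linarith
    have h4 : -κ ≤ (t + e) / s := by
      rw [le_div_iff₀ hs0]; nlinarith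
    have h5 : (t + e) / s ≤ l := by
      rw [div_le_iff₀ hs0]; nlinarith
    refine ⟨(t + e) / s, h4, h5, ?_⟩
    rw [haff _ (by linarith) h5, hxe, mul_div_cancel₀ _ hs0.ne']
    ring
  refine ⟨τ', hτ', ?_, Tr.one ?_⟩
  · obtain ⟨t', h2, h3, h4⟩ := hpre l' (by linarith) le_rfl
    rw [← h4]
    exact F.maps (hin _ (by linarith) h3)
  · rintro b ⟨⟨t, h2, h3, rfl⟩, -⟩
    obtain ⟨t', h4, h5, h6⟩ := hpre t h2 h3
    refine ⟨_, ⟨⟨t', h4, h5, rfl⟩, hin _ (by linarith) h5⟩, h6, ?_⟩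
    rw [add_sub_cancel_left, abs_mul, hτ, one_mul]
    have := S.L_pos
    exact abs_le.2 ⟨by linarith, by linarith⟩

/-- The segments around the pseudo-orbit as long as it stays at distance more than `κ` from `C`. -/
theorem Scale.run_free (S : Scale f s C r σ q T κ δ E L) (F : FoldMap f s C)
    (hx : ∀ n, x n ∈ Icc (0 : ℝ) 1) {a : ℕ} (herr : ∀ n, a ≤ n → |f (x n) - x (n + 1)| ≤ δ)
    {l : ℕ → ℝ} {τ : ℝ} (hτ : |τ| = 1) (hτI : x a + τ * l a ∈ Icc (0 : ℝ) 1) (p : ℕ)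
    (hl : Len x C q T κ L κ l (a + p))
    (hfree : ∀ j, a ≤ j → j < a + p → ∀ y ∈ C, κ < |x j - y|) :
    ∃ τ', |τ'| = 1 ∧ x (a + p) + τ' * l (a + p) ∈ Icc (0 : ℝ) 1 ∧
      Tr f x (3 * L) a p (Seg (x a) τ (-κ) (l a) ∩ Icc 0 1)
        (Seg (x (a + p)) τ' (-κ) (l (a + p)) ∩ Icc 0 1) := by
  induction p with
  | zero => exact ⟨τ, hτ, hτI, Tr.zero subset_rfl⟩
  | succ p ih =>
    obtain ⟨τ₁, hτ₁, -, htr⟩ := ih ⟨hl.low, hl.high, hl.step, fun j hj => hl.event j (by omega)⟩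
      (fun j h1 h2 => hfree j h1 (by omega))
    have hLp := S.L_pos
    have hfr : ∀ y ∈ C, l (a + p) < |x (a + p) - y| := by
      intro y hy
      have h1 := hfree (a + p) (by omega) (by omega) y hy
      rcases hl.event (a + p) (by omega) with h | ⟨i, hi1, hiT, y₁, hy₁, h2⟩
      · rwa [h]
      · by_contra hcon
        push Not at hcon
        have := S.away F hx (fun n hn => herr n (by omega)) hy le_rfl h1.le
          (by linarith [hl.high (a + p)]) hi1 hiT hy₁
        nlinarith [S.κ_pos, S.one_lt]
    obtain ⟨τ₂, hτ₂, hI, htr₂⟩ := S.step_free F hx (herr (a + p) (by omega)) hτ₁ (hl.low _)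
      (hl.high _) (hl.step _) (hl.low _) hfr
    exact ⟨τ₂, hτ₂, hI, htr.trans htr₂⟩

/-- Restart at a critical point `y`: the image of a segment of length at least `L - E` starting at `y`
contains the one-sided segment of length `L + 2 * s * E` starting at `f y`. -/
theorem Scale.reset (S : Scale f s C r σ q T κ δ E L) (F : FoldMap f s C)
    (hσ : ∀ c ∈ C, IsDir f s C r c (σ c)) {m : ℕ} {y τ w : ℝ} (hy : y ∈ C) (hτ : |τ| = 1)
    (hw : y + τ * w ∈ Icc (0 : ℝ) 1) (hwr : w ≤ r) (hw0 : L - E ≤ w) {A : Set ℝ}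
    (hA : Seg y τ 0 w ⊆ A) (hd : |y - x m| + w ≤ 3 * L) :
    Seg (f y) (σ y 0) 0 (L + 2 * s * E) ⊆ Icc (0 : ℝ) 1 ∧
      Tr f x (3 * L) m 1 A (Seg (f y) (σ y 0) 0 (L + 2 * s * E)) := by
  have hs := F.one_lt
  have hs0 := F.s_pos
  have hyI := F.sub hy
  have hpre : ∀ t, 0 ≤ t → t ≤ L + 2 * s * E → 0 ≤ t / s ∧ t / s ≤ w ∧
      y + τ * (t / s) ∈ Icc (0 : ℝ) 1 ∧ f (y + τ * (t / s)) = f y + σ y 0 * t := by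
    intro t h0 h1
    have h2 : 0 ≤ t / s := by positivity
    have h3 : t / s ≤ w := by
      rw [div_le_iff₀ hs0]
      nlinarith [S.exit]
    have h4 := sign_combo_mem hyI hw h2 h3 hτ
    refine ⟨h2, h3, h4, ?_⟩
    have h5 := abs_add_sign_mul_sub hτ h2 y
    rw [(hσ y hy).fold _ h4 (by rw [h5]; linarith), h5, mul_div_cancel₀ _ hs0.ne']
  constructor
  · rintro v ⟨t, h0, h1, rfl⟩
    obtain ⟨-, -, h4, h5⟩ := hpre t h0 h1
    rw [← h5]
    exact F.maps h4
  · refine Tr.one ?_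
    rintro v ⟨t, h0, h1, rfl⟩
    obtain ⟨h2, h3, h4, h5⟩ := hpre t h0 h1
    refine ⟨_, hA ⟨t / s, h2, h3, rfl⟩, h5, ?_⟩
    have := abs_sub_le (y + τ * (t / s)) y (x m)
    rw [abs_add_sign_mul_sub hτ h2] at this
    linarith

end

/-! ### The passage from one critical point to the next -/

section
variable {f : ℝ → ℝ} {s : ℝ} {C : Set ℝ} {r : ℝ} {σ : ℝ → ℕ → ℝ} {q : ℝ} {T : ℕ}
  {κ δ E L : ℝ} {x : ℕ → ℝ}

theorem sign_abs_sub {τ : ℝ} (hτ : |τ| = 1) (u a b : ℝ) :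
    |u + τ * a - (u + τ * b)| = |a - b| := by
  rw [show u + τ * a - (u + τ * b) = τ * (a - b) by ring, abs_mul, hτ, one_mul]

/-- The offset `b j` of `x (n + j)` from the orbit of `c`, measured towards the side `σ c j`. Until the
next critical point appears and as long as `b` is below `κ`, negative offsets can only be caused by the
errors `δ` and stay above `-κ`; the first offset not below `κ` is at most `2 * s * κ`. -/
theorem Scale.offset_bounds (S : Scale f s C r σ q T κ δ E L) (F : FoldMap f s C)
    (hx : ∀ n, x n ∈ Icc (0 : ℝ) 1) {n : ℕ} (herr : ∀ m, n ≤ m → |f (x m) - x (m + 1)| ≤ δ)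
    {c : ℝ} (hc : c ∈ C) (D : IsDir f s C r c (σ c)) {M : ℕ} (hM : δ * (s + 1) ^ M ≤ κ)
    (hno : ∀ j < M, ∀ v, 0 ≤ v → v ≤ E → f^[j + 1] c + σ c j * v ∉ C)
    {b : ℕ → ℝ} (hb : ∀ j, x (n + j) = f^[j + 1] c + σ c j * b j)
    (hb0 : -δ ≤ b 0) (J : ℕ) (hJ : J ≤ M) (hbκ : ∀ i < J, b i < κ) (hb0' : b 0 < κ) :
    -κ ≤ b J ∧ b J ≤ 2 * s * κ := by
  have hs := F.one_lt
  have hs0 := F.s_pos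
  have hκ := S.κ_pos
  have hδ := S.δ_pos
  have hδκ := S.δ_le
  have hE := S.E_low
  have hpow : ∀ j ≤ M, δ * (s + 1) ^ j ≤ κ := fun j hj => by
    refine le_trans ?_ hM
    gcongr
    linarith
  have key : ∀ J ≤ M, (∀ i < J, b i < κ) → -(δ * (s + 1) ^ J) ≤ b J ∧ b J ≤ 2 * s * κ := by
    intro J
    induction J with
    | zero => intro _ _; exact ⟨by simpa using hb0, by nlinarith⟩
    | succ J ih =>
      intro hJ hlt
      obtain ⟨h1, -⟩ := ih (by omega) (fun i hi => hlt i (by omega))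
      have h2 := hlt J (by omega)
      have he := herr (n + J) (by omega)
      have h3 := hpow (J + 1) hJ
      have h4 : δ * (s + 1) ^ (J + 1) = s * (δ * (s + 1) ^ J) + δ * (s + 1) ^ J := by ring
      have h5 : δ * 1 ≤ δ * (s + 1) ^ J := by
        gcongr
        exact one_le_pow₀ (by linarith)
      rw [add_assoc, hb (J + 1)] at he
      rcases le_or_gt 0 (b J) with h0 | h0
      · have hf := D.step J (b J) h0 (hb J ▸ hx _) (fun t' h6 h7 => hno J (by omega) t' h6.le
          (by nlinarith))
        rw [hb J, hf, sign_abs_sub (D.abs_eq _)] at he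
        obtain ⟨h6, h7⟩ := abs_le.1 he
        have h8 : 0 ≤ s * b J := by positivity
        have h9 : s * b J ≤ s * κ := by gcongr
        constructor <;> nlinarith
      · have hl := F.lip _ (hx (n + J)) _ (F.iter_mem (J + 1) (F.sub hc))
        have h6 : |x (n + J) - f^[J + 1] c| = -b J := by
          rw [hb J, add_sub_cancel_left, abs_mul, D.abs_eq, one_mul, abs_of_neg h0]
        rw [h6, ← Function.iterate_succ_apply' f] at hl
        have h7 := abs_sub_le (f^[J + 1 + 1] c + σ c (J + 1) * b (J + 1)) (f (x (n + J)))
          (f^[J + 1 + 1] c)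
        rw [abs_sub_comm _ (f (x (n + J))), add_sub_cancel_left, abs_mul, D.abs_eq, one_mul] at h7
        have h8 : s * (-b J) ≤ s * (δ * (s + 1) ^ J) := by gcongr; linarith
        obtain ⟨h9, h10⟩ := abs_le.1 (h7.trans (add_le_add he hl))
        constructor <;> nlinarith
  obtain ⟨h1, h2⟩ := key J hJ hbκ
  exact ⟨by linarith [hpow J hJ], h2⟩

/-- While the pseudo-orbit stays `κ`-close to the orbit of `c`, and until the next critical point appears
within `E`, one-sided segments starting at the orbit of `c` are carried along; the slack
`2 * s * κ` in their length is for the time at which the pseudo-orbit departs. -/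
theorem Scale.run_crit (S : Scale f s C r σ q T κ δ E L) (F : FoldMap f s C)
    (hx : ∀ n, x n ∈ Icc (0 : ℝ) 1) {n : ℕ} (herr : ∀ m, n ≤ m → |f (x m) - x (m + 1)| ≤ δ)
    {c : ℝ} (D : IsDir f s C r c (σ c))
    {b : ℕ → ℝ} (hb : ∀ j, x (n + j) = f^[j + 1] c + σ c j * b j)
    (J : ℕ) (hno : ∀ j < J, ∀ v, 0 ≤ v → v ≤ E → f^[j + 1] c + σ c j * v ∉ C)
    (hbκ : ∀ i < J, -κ ≤ b i ∧ b i < κ)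
    {l : ℕ → ℝ} (hl : Len x C q T κ L (E + κ) l (n + J))
    (hA : Seg (f c) (σ c 0) 0 (L + 2 * s * κ) ⊆ Icc (0 : ℝ) 1) :
    Seg (f^[J + 1] c) (σ c J) 0 (l (n + J) + 2 * s * κ) ⊆ Icc (0 : ℝ) 1 ∧
    Tr f x (3 * L) n J (Seg (f c) (σ c 0) 0 (L + 2 * s * κ))
      (Seg (f^[J + 1] c) (σ c J) 0 (l (n + J) + 2 * s * κ)) := by
  have hs := F.one_lt
  have hs0 := F.s_pos
  have hκ := S.κ_pos
  have hE := S.E_low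
  have hEL := S.E_le
  induction J with
  | zero =>
    have hsub : Seg (f^[0 + 1] c) (σ c 0) 0 (l (n + 0) + 2 * s * κ) ⊆
        Seg (f c) (σ c 0) 0 (L + 2 * s * κ) := Seg.mono le_rfl (by linarith [hl.high (n + 0)])
    exact ⟨hsub.trans hA, Tr.zero hsub⟩
  | succ J ih =>
    obtain ⟨hI, htr⟩ := ih (fun j hj => hno j (by omega)) (fun i hi => hbκ i (by omega))
      ⟨hl.low, hl.high, hl.step, fun j hj => hl.event j (by omega)⟩
    obtain ⟨hb1, hb2⟩ := hbκ J (by omega)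
    have hlh := hl.high (n + J)
    have hll := hl.low (n + J)
    have hfree : ∀ v, 0 ≤ v → v ≤ l (n + J) + 2 * s * κ → f^[J + 1] c + σ c J * v ∉ C := by
      intro v hv0 hv1 hvC
      have hvE : E < v := by
        by_contra hcon
        exact hno J (by omega) v hv0 (not_lt.1 hcon) hvC
      rcases hl.event (n + J) (by omega) with h | ⟨i, hi1, hiT, y, hy, hxy⟩
      · nlinarith
      · have hdist : |x (n + J) - (f^[J + 1] c + σ c J * v)| = v - b J := by
          rw [hb J, sign_abs_sub (D.abs_eq _), abs_sub_comm, abs_of_nonneg (by nlinarith)]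
        have := S.away F hx (j := n + J) (fun m hm => herr m (by omega)) hvC (θ := E - κ) (by nlinarith)
          (by rw [hdist]; linarith) (by rw [hdist]; nlinarith) hi1 hiT hy
        linarith [S.E_gap]
    have hpre : ∀ t, 0 ≤ t → t ≤ l (n + (J + 1)) + 2 * s * κ →
        0 ≤ t / s ∧ t / s ≤ l (n + J) + 2 * s * κ ∧
        f (f^[J + 1] c + σ c J * (t / s)) = f^[J + 1 + 1] c + σ c (J + 1) * t := by
      intro t h0 h1
      have h2 : 0 ≤ t / s := by positivity
      have h3 : t / s ≤ l (n + J) + 2 * s * κ := by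
        rw [div_le_iff₀ hs0]
        have h4 := hl.step (n + J)
        have h5 := S.lt
        rw [add_assoc] at h4
        have h6 : q * l (n + J) ≤ s * l (n + J) := by
          have : 0 ≤ l (n + J) := by linarith
          gcongr
        have h7 : 0 < 2 * s * κ := by positivity
        nlinarith
      refine ⟨h2, h3, ?_⟩
      rw [D.step J (t / s) h2 (hI ⟨_, h2, h3, rfl⟩)
        (fun t' h4 h5 => hfree t' h4.le (by linarith)), mul_div_cancel₀ _ hs0.ne']
    constructor
    · rintro v ⟨t, h0, h1, rfl⟩
      obtain ⟨h2, h3, h4⟩ := hpre t h0 h1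
      rw [← h4]
      exact F.maps (hI ⟨_, h2, h3, rfl⟩)
    · refine htr.trans (Tr.one ?_)
      rintro v ⟨t, h0, h1, rfl⟩
      obtain ⟨h2, h3, h4⟩ := hpre t h0 h1
      refine ⟨_, ⟨_, h2, h3, rfl⟩, h4, ?_⟩
      rw [hb J, sign_abs_sub (D.abs_eq _)]
      exact abs_le.2 ⟨by nlinarith, by nlinarith⟩

/-- What can be reached from the set `A` at time `n`: either the pseudo-orbit comes close to a critical
point `y` at some time `n + p`, and a long one-sided segment at `f y` is reached one step later, or at
all late times the two-sided segment of radius `κ` around the pseudo-orbit, cut off at the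
endpoints of `[0,1]`, is reached. -/
def Outcome (f : ℝ → ℝ) (s : ℝ) (C : Set ℝ) (σ : ℝ → ℕ → ℝ) (κ E L : ℝ) (x : ℕ → ℝ) (n : ℕ)
    (A : Set ℝ) : Prop :=
  (∃ p, ∃ y ∈ C, |x (n + p) - y| ≤ E + κ ∧
    Seg (f y) (σ y 0) 0 (L + 2 * s * E) ⊆ Icc (0 : ℝ) 1 ∧
    Tr f x (3 * L) n (p + 1) A (Seg (f y) (σ y 0) 0 (L + 2 * s * E))) ∨
  ∃ p₀, ∀ p, p₀ ≤ p → ∃ τ, |τ| = 1 ∧ x (n + p) + τ * κ ∈ Icc (0 : ℝ) 1 ∧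
    Tr f x (3 * L) n p A (Seg (x (n + p)) τ (-κ) κ ∩ Icc 0 1)

/-- Once the segment is around the pseudo-orbit, at time `n + p` and for every admissible length function,
one follows the pseudo-orbit up to its next encounter with `C`, if any, and restarts there. -/
theorem Scale.outcome_of_free (S : Scale f s C r σ q T κ δ E L) (F : FoldMap f s C)
    (hσ : ∀ c ∈ C, IsDir f s C r c (σ c))
    (hx : ∀ n, x n ∈ Icc (0 : ℝ) 1) {n : ℕ} (herr : ∀ m, n ≤ m → |f (x m) - x (m + 1)| ≤ δ)
    {A : Set ℝ} (p : ℕ)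
    (h : ∀ l : ℕ → ℝ, Len x C q T κ L (E + κ) l (n + p) → ∃ τ, |τ| = 1 ∧
      x (n + p) + τ * l (n + p) ∈ Icc (0 : ℝ) 1 ∧
      Tr f x (3 * L) n p A (Seg (x (n + p)) τ (-κ) (l (n + p)) ∩ Icc 0 1)) :
    Outcome f s C σ κ E L x n A := by
  classical
  have hs := F.one_lt
  have hκ := S.κ_pos
  have hE := S.E_low
  have hEL := S.E_le
  have hκE : κ ≤ E := by nlinarith
  by_cases hex : ∃ k, ∃ y ∈ C, |x (n + p + k) - y| ≤ κ
  · obtain ⟨y, hy, hyx⟩ := Nat.find_spec hex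
    set k := Nat.find hex
    have hfree : ∀ j, n + p ≤ j → j < n + p + k → ∀ y ∈ C, κ < |x j - y| := by
      intro j h1 h2 y hy
      by_contra hcon
      refine Nat.find_min hex (m := j - (n + p)) (by omega) ⟨y, hy, ?_⟩
      rw [show n + p + (j - (n + p)) = j by omega]
      exact not_lt.1 hcon
    have hl := S.len_event (x := x) hy hyx
    have hl' := S.len_event (x := x) hy (hyx.trans (show κ ≤ E + κ by linarith))
    set l : ℕ → ℝ := fun j => κ * q ^ (T - (n + p + k - j)) with hldef
    have hlm : l (n + p + k) = L := by
      rw [S.L_eq, hldef]; simp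
    obtain ⟨τ, hτ, hτI, htr⟩ := h l ⟨hl'.low, hl'.high, hl'.step, fun j hj => hl'.event j (by omega)⟩
    obtain ⟨τ', hτ', hτI', htr'⟩ := S.run_free F hx (fun m hm => herr m (by omega)) hτ hτI k hl hfree
    rw [hlm] at hτI' htr'
    have htot := htr.trans htr'
    set m := n + p + k with hm
    have hd : |τ' * (y - x m)| ≤ κ := by rw [abs_mul, hτ', one_mul, abs_sub_comm]; exact hyx
    set d := τ' * (y - x m) with hddef
    obtain ⟨hd1, hd2⟩ := abs_le.1 hd
    have hyd : y = x m + τ' * d := by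
      rw [hddef, ← mul_assoc, sign_sq_of_abs_one hτ']; ring
    have hyI := F.sub hy
    have hwI : y + τ' * (L - d) ∈ Icc (0 : ℝ) 1 := by
      convert hτI' using 1
      rw [hyd]; ring
    obtain ⟨hI, hres⟩ := S.reset F hσ (m := m) (w := L - d) hy hτ' hwI (by linarith [S.L_r])
      (by linarith) (A := Seg (x m) τ' (-κ) L ∩ Icc 0 1) (by
        rintro v ⟨t, h0, h1, rfl⟩
        refine ⟨⟨d + t, by linarith, by linarith, ?_⟩, sign_combo_mem hyI hwI h0 h1 hτ'⟩
        rw [hyd]; ring) (by rw [abs_sub_comm] at hyx; linarith)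
    left
    refine ⟨p + k, y, hy, ?_, hI, ?_⟩
    · rw [← add_assoc]; linarith
    · exact htot.trans (by rwa [← add_assoc])
  · push Not at hex
    right
    refine ⟨p, fun p' hp' => ?_⟩
    obtain ⟨k, rfl⟩ := Nat.exists_eq_add_of_le hp'
    obtain ⟨τ, hτ, hτI, htr⟩ := h (fun _ => κ) (S.len_const _ _)
    obtain ⟨τ', hτ', hτI', htr'⟩ := S.run_free F hx (fun m hm => herr m (by omega)) (l := fun _ => κ)
      hτ hτI k (S.len_const _ _) (fun j h1 h2 y hy => by
        have := hex (j - (n + p)) y hy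
        rwa [show n + p + (j - (n + p)) = j by omega] at this)
    rw [← add_assoc]
    refine ⟨τ', hτ', hτI', ?_⟩
    exact Tr.trans (B := Seg (x (n + p)) τ (-κ) κ ∩ Icc 0 1) htr (by assumption)

/-- From a one-sided segment at `f c`: if the offset from the orbit of `c` reaches `κ` before the next
critical point appears (time `M`), the segment around the pseudo-orbit lies in the one-sided
segment; otherwise the pseudo-orbit is within `E + κ` of that critical point at time `M`, and the
process restarts there. -/
theorem Scale.outcome_of_crit (S : Scale f s C r σ q T κ δ E L) (F : FoldMap f s C)
    (hσ : ∀ c ∈ C, IsDir f s C r c (σ c))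
    (hx : ∀ n, x n ∈ Icc (0 : ℝ) 1) {n : ℕ} (herr : ∀ m, n ≤ m → |f (x m) - x (m + 1)| ≤ δ)
    {c : ℝ} (hc : c ∈ C) (hA : Seg (f c) (σ c 0) 0 (L + 2 * s * κ) ⊆ Icc (0 : ℝ) 1)
    (hlow : -δ ≤ σ c 0 * (x n - f c)) (hhigh : σ c 0 * (x n - f c) < κ) :
    Outcome f s C σ κ E L x n (Seg (f c) (σ c 0) 0 (L + 2 * s * κ)) := by
  classical
  have hs := F.one_lt
  have hκ := S.κ_pos
  have hE := S.E_low
  have hEL := S.E_le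
  have D := hσ c hc
  have hex : ∃ j, ∃ v, 0 ≤ v ∧ v ≤ E ∧ f^[j + 1] c + σ c j * v ∈ C := by
    obtain ⟨j, -, h⟩ := S.link c hc
    exact ⟨j, h⟩
  have hM : δ * (s + 1) ^ Nat.find hex ≤ κ := by
    obtain ⟨j, hj, h⟩ := S.link c hc
    refine le_trans ?_ hj
    have := S.δ_pos
    gcongr
    · linarith
    · exact Nat.find_min' hex h
  obtain ⟨v, hv0, hvE, hvC⟩ := Nat.find_spec hex
  have hno : ∀ j < Nat.find hex, ∀ v, 0 ≤ v → v ≤ E → f^[j + 1] c + σ c j * v ∉ C :=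
    fun j hj v h0 h1 h2 => Nat.find_min hex hj ⟨v, h0, h1, h2⟩
  set M := Nat.find hex
  set b : ℕ → ℝ := fun j => σ c j * (x (n + j) - f^[j + 1] c) with hbdef
  have hb : ∀ j, x (n + j) = f^[j + 1] c + σ c j * b j := by
    intro j
    rw [hbdef]
    simp only
    rw [← mul_assoc, sign_sq_of_abs_one (D.abs_eq j)]; ring
  have hbd := S.offset_bounds F hx herr hc D hM hno hb hlow
  by_cases hexJ : ∃ J, J ≤ M ∧ κ ≤ b J
  · obtain ⟨hJM, hJκ⟩ := Nat.find_spec hexJ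
    have hmin : ∀ i < Nat.find hexJ, b i < κ := by
      intro i hi
      by_contra hcon
      exact Nat.find_min hexJ hi ⟨by omega, not_lt.1 hcon⟩
    set J := Nat.find hexJ
    refine S.outcome_of_free F hσ hx herr J fun l hl => ?_
    obtain ⟨hI, htr⟩ := S.run_crit F hx herr D hb J (fun j hj => hno j (by omega))
      (fun i hi => ⟨(hbd i (by omega) (fun i' hi' => hmin i' (by omega)) hhigh).1, hmin i hi⟩) hl hA
    obtain ⟨-, hJup⟩ := hbd J hJM hmin hhigh
    have hll := hl.low (n + J)
    have hsub : Seg (x (n + J)) (σ c J) (-κ) (l (n + J)) ⊆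
        Seg (f^[J + 1] c) (σ c J) 0 (l (n + J) + 2 * s * κ) := by
      rintro w ⟨t, h0, h1, rfl⟩
      refine ⟨b J + t, by linarith, by linarith, ?_⟩
      rw [hb J]; ring
    exact ⟨σ c J, D.abs_eq J, hI (hsub ⟨_, by linarith, le_rfl, rfl⟩),
      htr.mono (inter_subset_left.trans hsub)⟩
  · push Not at hexJ
    have hbb : ∀ i ≤ M, -κ ≤ b i ∧ b i < κ := fun i hi =>
      ⟨(hbd i hi (fun i' hi' => hexJ i' (by omega)) hhigh).1, hexJ i hi⟩
    obtain ⟨hb1, hb2⟩ := hbb M le_rfl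
    have hdist : |x (n + M) - (f^[M + 1] c + σ c M * v)| ≤ E + κ := by
      rw [hb M, sign_abs_sub (D.abs_eq _)]
      exact abs_le.2 ⟨by linarith, by linarith⟩
    obtain ⟨hI, htr⟩ := S.run_crit F hx herr D hb M hno (fun i hi => hbb i hi.le)
      (S.len_event hvC hdist) hA
    rw [Nat.sub_self, Nat.sub_zero, ← S.L_eq] at hI htr
    have hsub : Seg (f^[M + 1] c + σ c M * v) (σ c M) 0 (L + 2 * s * κ - E) ⊆
        Seg (f^[M + 1] c) (σ c M) 0 (L + 2 * s * κ) := by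
      rintro w ⟨t, h0, h1, rfl⟩
      exact ⟨v + t, by linarith, by linarith, by ring⟩
    have hsκ : 0 < s * κ := mul_pos (by linarith) hκ
    obtain ⟨hI', hres⟩ := S.reset F hσ (m := n + M) hvC (D.abs_eq M)
      (hI (hsub ⟨L + 2 * s * κ - E, by nlinarith, le_rfl, rfl⟩)) (by nlinarith [S.L_r])
      (by nlinarith) hsub (by rw [abs_sub_comm] at hdist; nlinarith)
    exact Or.inl ⟨M, _, hvC, hdist, hI', htr.trans hres⟩

end

/-! ### Refinement and existence of scales -/

section
variable {f : ℝ → ℝ} {s : ℝ} {C : Set ℝ} {r : ℝ} {σ : ℝ → ℕ → ℝ} {q : ℝ} {T : ℕ}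
  {κ δ E L : ℝ} {x : ℕ → ℝ}

/-- The segments which are carried along at time `n`. First kind: a one-sided segment at the value `f c`
of a critical point, `x n` being near `f c` and at most `δ` on the wrong side. Second kind: a
segment around `x n` inside `[0,1]`, reaching to `-κ` on one side and to `L` on the other. -/
def State (f : ℝ → ℝ) (s : ℝ) (C : Set ℝ) (σ : ℝ → ℕ → ℝ) (κ δ L : ℝ) (x : ℕ → ℝ) (n : ℕ)
    (A : Set ℝ) : Prop :=
  (∃ c ∈ C, A = Seg (f c) (σ c 0) 0 (L + 2 * s * κ) ∧ A ⊆ Icc (0 : ℝ) 1 ∧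
    -δ ≤ σ c 0 * (x n - f c) ∧ σ c 0 * (x n - f c) < κ) ∨
  ∃ τ, |τ| = 1 ∧ x n + τ * L ∈ Icc (0 : ℝ) 1 ∧ A = Seg (x n) τ (-κ) L ∩ Icc 0 1

theorem State.subset {n : ℕ} {A : Set ℝ} (h : State f s C σ κ δ L x n A) :
    A ⊆ Icc (0 : ℝ) 1 := by
  rcases h with ⟨c, -, -, h, -⟩ | ⟨τ, -, -, rfl⟩
  · exact h
  · exact inter_subset_right

theorem State.nonempty (S : Scale f s C r σ q T κ δ E L) (F : FoldMap f s C)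
    (hx : ∀ n, x n ∈ Icc (0 : ℝ) 1) {n : ℕ} {A : Set ℝ} (h : State f s C σ κ δ L x n A) :
    A.Nonempty := by
  have hs := F.one_lt
  have hκ := S.κ_pos
  have hL := S.L_pos
  rcases h with ⟨c, -, rfl, -⟩ | ⟨τ, -, -, rfl⟩
  · exact ⟨f c, 0, le_rfl, by positivity, by ring⟩
  · exact ⟨x n, ⟨0, by linarith, hL.le, by ring⟩, hx n⟩

theorem Scale.outcome (S : Scale f s C r σ q T κ δ E L) (F : FoldMap f s C)
    (hσ : ∀ c ∈ C, IsDir f s C r c (σ c))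
    (hx : ∀ n, x n ∈ Icc (0 : ℝ) 1) {n : ℕ} (herr : ∀ m, n ≤ m → |f (x m) - x (m + 1)| ≤ δ)
    {A : Set ℝ} (h : State f s C σ κ δ L x n A) : Outcome f s C σ κ E L x n A := by
  rcases h with ⟨c, hc, rfl, hA, h1, h2⟩ | ⟨τ, hτ, hτI, rfl⟩
  · exact S.outcome_of_crit F hσ hx herr hc hA h1 h2
  · refine S.outcome_of_free F hσ hx herr 0 fun l hl => ⟨τ, hτ, ?_, Tr.zero ?_⟩
    · exact sign_combo_mem (hx _) hτI (S.κ_pos.le.trans (hl.low _)) (hl.high _) hτ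
    · exact inter_subset_inter_left _ (Seg.mono le_rfl (hl.high _))

/-- After a restart at `y`, the one-sided segment contains a state of any finer scale; its kind depends on
whether `x (m + 1)` is at least `κ'` away from `f y`. -/
theorem Scale.convert (S : Scale f s C r σ q T κ δ E L) (F : FoldMap f s C)
    (hσ : ∀ c ∈ C, IsDir f s C r c (σ c)) (hx : ∀ n, x n ∈ Icc (0 : ℝ) 1)
    {κ' δ' E' L' : ℝ} (S' : Scale f s C r σ q T κ' δ' E' L') (hκ : κ' ≤ κ)
    {m : ℕ} (herr : |f (x m) - x (m + 1)| ≤ δ') {y : ℝ} (hy : y ∈ C) (hxy : |x m - y| ≤ E + κ)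
    (hI : Seg (f y) (σ y 0) 0 (L + 2 * s * E) ⊆ Icc (0 : ℝ) 1) :
    ∃ A' ⊆ Seg (f y) (σ y 0) 0 (L + 2 * s * E), State f s C σ κ' δ' L' x (m + 1) A' := by
  have hs := F.one_lt
  have hκ0 := S.κ_pos
  have hκ0' := S'.κ_pos
  have hE := S.E_low
  have hEL := S.E_le
  have hL' : L' ≤ L := by
    rw [S.L_eq, S'.L_eq]
    have := S.one_lt
    gcongr
  have hLp' := S'.L_pos
  have D := hσ y hy
  have hf := D.fold (x m) (hx m) (by nlinarith [S.L_r])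
  set b := σ y 0 * (x (m + 1) - f y) with hb
  have hxb : x (m + 1) = f y + σ y 0 * b := by
    rw [hb, ← mul_assoc, sign_sq_of_abs_one (D.abs_eq 0)]; ring
  rw [hf, hxb, sign_abs_sub (D.abs_eq 0)] at herr
  obtain ⟨h1, h2⟩ := abs_le.1 herr
  have h3 : 0 ≤ s * |x m - y| := by positivity
  have h4 : s * |x m - y| ≤ s * (E + κ) := by gcongr
  have hδ' := S'.δ_le
  have hsE : s * ((2 * s + 1) * κ) ≤ s * E := by gcongr
  have hs2 : 0 < (s - 1) * κ := mul_pos (by linarith) hκ0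
  have hs3 : 0 < (s - 1) * s * κ := mul_pos (mul_pos (by linarith) (by linarith)) hκ0
  rcases lt_or_ge b κ' with hlt | hge
  · refine ⟨Seg (f y) (σ y 0) 0 (L' + 2 * s * κ'), ?_, Or.inl ⟨y, hy, rfl, ?_, ?_, hlt⟩⟩
    · refine Seg.mono le_rfl ?_
      have : s * κ' ≤ s * κ := by gcongr
      nlinarith
    · refine subset_trans (Seg.mono le_rfl ?_) hI
      have : s * κ' ≤ s * κ := by gcongr
      nlinarith
    · linarith
  · have hsub : Seg (x (m + 1)) (σ y 0) (-κ') L' ⊆ Seg (f y) (σ y 0) 0 (L + 2 * s * E) := by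
      rintro v ⟨t, h5, h6, rfl⟩
      refine ⟨b + t, by linarith, by nlinarith, ?_⟩
      rw [hxb]; ring
    exact ⟨Seg (x (m + 1)) (σ y 0) (-κ') L' ∩ Icc 0 1, inter_subset_left.trans hsub,
      Or.inr ⟨σ y 0, D.abs_eq 0, hI (hsub ⟨L', by linarith, le_rfl, rfl⟩), rfl⟩⟩

/-- From a state of one scale, a state of a finer scale is reached at some time after `N`, from which on
the errors are at most `δ'`. -/
theorem Scale.refine (S : Scale f s C r σ q T κ δ E L) (F : FoldMap f s C)
    (hσ : ∀ c ∈ C, IsDir f s C r c (σ c)) (hx : ∀ n, x n ∈ Icc (0 : ℝ) 1)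
    {κ' δ' E' L' : ℝ} (S' : Scale f s C r σ q T κ' δ' E' L') (hLκ : L' ≤ κ)
    {N : ℕ} (herrN : ∀ m, N ≤ m → |f (x m) - x (m + 1)| ≤ δ')
    {n : ℕ} (herr : ∀ m, n ≤ m → |f (x m) - x (m + 1)| ≤ δ)
    {A : Set ℝ} (h : State f s C σ κ δ L x n A) :
    ∃ p A', 1 ≤ p ∧ N ≤ n + p ∧ Tr f x (3 * L) n p A A' ∧ State f s C σ κ' δ' L' x (n + p) A' := by
  have hκκ : κ' ≤ κ := by
    refine le_trans ?_ hLκ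
    rw [S'.L_eq]
    exact le_mul_of_one_le_right S'.κ_pos.le (one_le_pow₀ S'.one_lt.le)
  induction hk : N - n using Nat.strong_induction_on generalizing n A with
  | _ k ih =>
  rcases S.outcome F hσ hx herr h with ⟨p, y, hy, hxy, hI, htr⟩ | ⟨p₀, hp⟩
  · rcases le_or_gt N (n + p) with hN | hN
    · obtain ⟨A', hA', hst⟩ := S.convert F hσ hx S' hκκ (herrN _ hN) hy hxy hI
      exact ⟨p + 1, A', by omega, by omega, htr.mono hA', hst⟩
    · obtain ⟨A', hA', hst⟩ := S.convert F hσ hx S le_rfl (herr _ (by omega)) hy hxy hI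
      obtain ⟨p', A'', h1, h2, h3, h4⟩ := ih (N - (n + p + 1)) (by omega)
        (fun m hm => herr m (by omega)) hst rfl
      refine ⟨p + 1 + p', A'', by omega, by omega, (htr.mono hA').trans h3, ?_⟩
      rwa [show n + (p + 1 + p') = n + p + 1 + p' by omega]
  · obtain ⟨τ, hτ, hτI, htr⟩ := hp (max p₀ (N + 1)) (le_max_left _ _)
    have hge : N + 1 ≤ max p₀ (N + 1) := le_max_right _ _
    refine ⟨max p₀ (N + 1), _, by omega, by omega, htr.mono (inter_subset_inter_left _
      (Seg.mono (neg_le_neg hκκ) hLκ)), Or.inr ⟨τ, hτ, ?_, rfl⟩⟩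
    exact sign_combo_mem (hx _) hτI S'.L_pos.le hLκ hτ

theorem Scale.initial (S : Scale f s C r σ q T κ δ E L) (hx : ∀ n, x n ∈ Icc (0 : ℝ) 1) :
    ∃ A, State f s C σ κ δ L x 0 A := by
  have hL := S.L_pos
  have hL2 := S.L_half
  have h0 := hx 0
  rcases le_total (x 0) (1 / 2) with h | h
  · exact ⟨_, Or.inr ⟨1, by simp, ⟨by linarith [h0.1], by linarith⟩, rfl⟩⟩
  · exact ⟨_, Or.inr ⟨-1, by simp, ⟨by linarith, by linarith [h0.2]⟩, rfl⟩⟩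

/-- Scales of arbitrarily small size exist, with `q` and `T` independent of the size: `E / κ` and `L / κ`
are fixed, `L` is small, and `δ` is chosen last, depending on the times at which the critical points
are linked within `E`. -/
theorem exists_scale (F : FoldMap f s C) (hr : 0 < r)
    (hlink : ∀ ε > 0, ∀ c ∈ C, NearLinked f C (σ c) ε c) :
    ∃ q T, ∀ η > 0, ∃ κ δ E L, Scale f s C r σ q T κ δ E L ∧ L ≤ η := by
  have hs := F.one_lt
  have hs0 := F.s_pos
  set q := (1 + s) / 2 with hq
  have hq1 : 1 < q := by rw [hq]; linarith
  have hqs : q < s := by rw [hq]; linarith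
  set B := max (2 * s + 1) ((q + 2) / (q - 1)) with hB
  have hB1 : 2 * s + 1 ≤ B := le_max_left _ _
  have hB2 : q + 2 ≤ B * (q - 1) := by
    have := le_max_right (2 * s + 1) ((q + 2) / (q - 1))
    rwa [div_le_iff₀ (by linarith)] at this
  obtain ⟨T, hT⟩ := pow_unbounded_of_one_lt (3 * s * B / (s - 1)) hq1
  rw [div_lt_iff₀ (by linarith)] at hT
  obtain ⟨γ, hγ, hgap⟩ := F.exists_gap T
  refine ⟨q, T, fun η hη => ?_⟩
  set D := q ^ T with hD
  have hD0 : 0 < D := by positivity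
  have hP0 : 0 < (s + 1) ^ T := by positivity
  set L := min (min η (1 / 2)) (min (r / 3) (γ / (6 * (s + 1) ^ T))) with hL
  have hL0 : 0 < L := by positivity
  have hLη : L ≤ η := (min_le_left _ _).trans (min_le_left _ _)
  have hL2 : L ≤ 1 / 2 := (min_le_left _ _).trans (min_le_right _ _)
  have hLr : L ≤ r / 3 := (min_le_right _ _).trans (min_le_left _ _)
  have hLγ : 6 * L * (s + 1) ^ T ≤ γ := by
    have : L ≤ γ / (6 * (s + 1) ^ T) := (min_le_right _ _).trans (min_le_right _ _)
    rw [le_div_iff₀ (by positivity)] at this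
    linarith
  set κ := L / D with hκ
  have hκ0 : 0 < κ := by positivity
  have hLκ : L = κ * D := by rw [hκ]; field_simp
  have hB0 : 0 < B := by linarith
  have hexit : 3 * s * (B * κ) ≤ L * (s - 1) := by
    rw [hLκ]
    have := mul_le_mul_of_nonneg_left hT.le hκ0.le
    linarith
  have hj : ∀ c ∈ C, ∃ δ > 0, ∃ j, δ * (s + 1) ^ j ≤ κ ∧
      ∃ v, 0 ≤ v ∧ v ≤ B * κ ∧ f^[j + 1] c + σ c j * v ∈ C := by
    intro c hc
    obtain ⟨j, h⟩ := hlink (B * κ) (by positivity) c hc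
    exact ⟨κ / (s + 1) ^ j, by positivity, j, by
      rw [div_mul_cancel₀]; positivity, h⟩
  obtain ⟨δ₀, hδ₀, hδlink⟩ := exists_uniform_of_finite F.fin
    (P := fun c δ => ∃ j, δ * (s + 1) ^ j ≤ κ ∧
      ∃ v, 0 ≤ v ∧ v ≤ B * κ ∧ f^[j + 1] c + σ c j * v ∈ C)
    (fun y ρ ρ' hle h => by
      obtain ⟨j, h1, h2⟩ := h
      refine ⟨j, le_trans ?_ h1, h2⟩
      gcongr) hj
  have hsq : 0 < s - q := by linarith
  set δ := min δ₀ (min κ ((s - q) * κ)) with hδ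
  have hδ0 : 0 < δ := by positivity
  refine ⟨κ, δ, B * κ, L, ?_, hLη⟩
  exact
    { κ_pos := hκ0
      δ_pos := hδ0
      δ_le := (min_le_right _ _).trans (min_le_left _ _)
      δ_le' := (min_le_right _ _).trans (min_le_right _ _)
      one_lt := hq1
      lt := hqs
      E_low := by gcongr
      E_gap := by nlinarith
      E_le := by
        have h1 : 0 < B * κ := by positivity
        have h2 : (s - 1) * (B * κ) ≤ (s - 1) * L := by nlinarith
        exact le_of_mul_le_mul_left h2 (by linarith)
      L_eq := hLκ
      exit := by nlinarith
      gap := fun y hy y' hy' i hi h => hgap y hy y' hy' i hi (h.trans_le hLγ)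
      L_r := by linarith
      L_half := hL2
      link := fun c hc => by
        obtain ⟨j, h1, h2⟩ := hδlink c hc
        refine ⟨j, le_trans ?_ h1, h2⟩
        gcongr
        exact min_le_left _ _ }

end

/-! ### Linking implies s-limit shadowing -/

/-- An infinite chain of transitions between nonempty sets is realized by a single orbit. -/
theorem exists_orbit_of_chain {f : ℝ → ℝ}
    (hmaps : MapsTo f (Icc (0 : ℝ) 1) (Icc (0 : ℝ) 1)) (hcont : ContinuousOn f (Icc (0 : ℝ) 1))
    {x ρ : ℕ → ℝ} {n p : ℕ → ℕ} {A : ℕ → Set ℝ} (hn0 : n 0 = 0) (hp : ∀ i, 1 ≤ p i)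
    (hn : ∀ i, n (i + 1) = n i + p i)
    (hT : ∀ i, Tr f x (ρ i) (n i) (p i) (A i) (A (i + 1)))
    (hne : ∀ i, (A i).Nonempty) (hA : A 0 ⊆ Icc (0 : ℝ) 1) :
    ∃ z ∈ Icc (0 : ℝ) 1, ∀ j i, n i ≤ j → j < n (i + 1) → |f^[j] z - x j| ≤ ρ i := by
  have hle : ∀ i, i ≤ n i := by
    intro i
    induction i with
    | zero => omega
    | succ i ih => have := hp i; have := hn i; omega
  have key : ∀ i, ∀ b ∈ A i, ∃ a ∈ A 0, f^[n i] a = b ∧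
      ∀ i' < i, ∀ j, n i' ≤ j → j < n (i' + 1) → |f^[j] a - x j| ≤ ρ i' := by
    intro i
    induction i with
    | zero => exact fun b hb => ⟨b, hb, by rw [hn0]; rfl, by simp⟩
    | succ i ih =>
      intro b hb
      obtain ⟨b', hb', rfl, hclose⟩ := hT i b hb
      obtain ⟨a, ha, rfl, hprev⟩ := ih b' hb'
      refine ⟨a, ha, by rw [hn, add_comm, Function.iterate_add_apply], fun i' hi' j h1 h2 => ?_⟩
      rcases Nat.lt_succ_iff_lt_or_eq.1 hi' with h | rfl
      · exact hprev i' h j h1 h2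
      · rw [hn] at h2
        have := hclose (j - n i') (by omega)
        rwa [← Function.iterate_add_apply, show j - n i' + n i' = j by omega,
          show n i' + (j - n i') = j by omega] at this
  refine exists_orbit_of_finite hmaps hcont
    (G := fun j => {v | ∀ i, n i ≤ j → j < n (i + 1) → |v - x j| ≤ ρ i}) (fun j => ?_) fun N => ?_
  · simp only [ofPred_forall]
    refine isClosed_iInter fun i => isClosed_iInter fun _ => isClosed_iInter fun _ => ?_
    exact isClosed_le (by fun_prop) continuous_const
  · obtain ⟨b, hb⟩ := hne (N + 1)
    obtain ⟨a, ha, -, h⟩ := key (N + 1) b hb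
    refine ⟨a, hA ha, fun j hj i h1 h2 => h i ?_ j h1 h2⟩
    have := hle i
    omega

/-- The asymptotic clause of s-limit shadowing. -/
theorem asymptotic_of_linking {f : ℝ → ℝ} {s : ℝ}
    (hmaps : MapsTo f (Icc (0 : ℝ) 1) (Icc (0 : ℝ) 1)) (hcont : ContinuousOn f (Icc (0 : ℝ) 1))
    (F : FoldMap f s (Crit f)) (hL : LinkingProperty f) {ε : ℝ} (hε : 0 < ε) :
    ∃ δ > 0, ∀ x : ℕ → ℝ, (∀ n, x n ∈ Icc (0 : ℝ) 1) → (∀ n, dist (f (x n)) (x (n + 1)) < δ) →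
      Tendsto (fun n => dist (f (x n)) (x (n + 1))) atTop (𝓝 0) →
      ∃ z ∈ Icc (0 : ℝ) 1, (∀ n, dist (f^[n] z) (x n) < ε) ∧
        Tendsto (fun n => dist (f^[n] z) (x n)) atTop (𝓝 0) := by
  obtain ⟨r, hr, hdir⟩ := F.exists_dir
  choose! σ hσ using hdir
  have hlink : ∀ ε > 0, ∀ c ∈ Crit f, NearLinked f (Crit f) (σ c) ε c := by
    intro ε hε c hc
    obtain ⟨y, hy, hcy⟩ := hL c hc
    obtain ⟨j, v, h0, h1, h2⟩ := nearLinked_of_epsLinked F (hσ c hc) (min_le_right ε r) hy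
      (hcy _ (lt_min hε hr))
    exact ⟨j, v, h0, h1.trans (min_le_left _ _), h2⟩
  obtain ⟨q, T, hscale⟩ := exists_scale (σ := σ) F hr hlink
  choose! κ δ E L S hLη using hscale
  -- sizes of a sequence of scales, each finer than the preceding one, tending to zero
  let η : ℕ → ℝ := fun i => Nat.rec (ε / 4) (fun i t => min (κ t) (1 / ((i : ℝ) + 1))) i
  have hηs : ∀ i, η (i + 1) = min (κ (η i)) (1 / ((i : ℝ) + 1)) := fun i => rfl
  have hη : ∀ i, 0 < η i := by
    intro i
    induction i with
    | zero => show 0 < ε / 4; linarith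
    | succ i ih => rw [hηs]; exact lt_min (S _ ih).κ_pos (by positivity)
  have hκL : ∀ i, L (η (i + 1)) ≤ κ (η i) := fun i =>
    (hLη _ (hη (i + 1))).trans ((hηs i).le.trans (min_le_left _ _))
  have hκle : ∀ i, κ (η i) ≤ L (η i) := fun i => by
    have S' := S _ (hη i)
    rw [S'.L_eq]
    exact le_mul_of_one_le_right S'.κ_pos.le (one_le_pow₀ S'.one_lt.le)
  have hanti : Antitone fun i => L (η i) := antitone_nat_of_succ_le fun i => (hκL i).trans (hκle i)
  have hL0 : ∀ i, 3 * L (η i) < ε := fun i => by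
    have h1 : L (η i) ≤ L (η 0) := hanti (Nat.zero_le i)
    have h2 : L (η 0) ≤ ε / 4 := hLη _ (hη 0)
    linarith
  refine ⟨δ (η 0), (S _ (hη 0)).δ_pos, fun x hx hxδ hxlim => ?_⟩
  have hN : ∀ i, ∃ N, ∀ m, N ≤ m → |f (x m) - x (m + 1)| ≤ δ (η i) := fun i => by
    obtain ⟨N, hN⟩ := eventually_atTop.1 (hxlim.eventually (gt_mem_nhds (S _ (hη i)).δ_pos))
    exact ⟨N, fun m hm => (hN m hm).le⟩
  choose N hN using hN
  -- one state `(time, segment)` for each scale; the errors after that time fit the scale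
  have hchain : ∃ g : ℕ → ℕ × Set ℝ, (g 0).1 = 0 ∧ ∀ i,
      (State f s (Crit f) σ (κ (η i)) (δ (η i)) (L (η i)) x (g i).1 (g i).2 ∧
        ∀ m, (g i).1 ≤ m → |f (x m) - x (m + 1)| ≤ δ (η i)) ∧
      ∃ p, 1 ≤ p ∧ (g (i + 1)).1 = (g i).1 + p ∧
        Tr f x (3 * L (η i)) (g i).1 p (g i).2 (g (i + 1)).2 := by
    let P : ℕ → ℕ × Set ℝ → Prop := fun i a =>
      State f s (Crit f) σ (κ (η i)) (δ (η i)) (L (η i)) x a.1 a.2 ∧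
        ∀ m, a.1 ≤ m → |f (x m) - x (m + 1)| ≤ δ (η i)
    have hstep : ∀ i a, P i a → ∃ b, P (i + 1) b ∧ ∃ p, 1 ≤ p ∧ b.1 = a.1 + p ∧
        Tr f x (3 * L (η i)) a.1 p a.2 b.2 := by
      rintro i ⟨n, A⟩ ⟨h1, h2⟩
      obtain ⟨p, A', hp, hNp, hT, h'⟩ := (S _ (hη i)).refine F hσ hx (S _ (hη (i + 1))) (hκL i)
        (hN (i + 1)) h2 h1
      exact ⟨⟨n + p, A'⟩, ⟨h', fun m hm => hN (i + 1) m (hNp.trans hm)⟩, p, hp, rfl, hT⟩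
    choose! nxt hnxt1 hnxt2 using hstep
    obtain ⟨A₀, hA₀⟩ := (S _ (hη 0)).initial hx
    let g : ℕ → ℕ × Set ℝ := fun i => Nat.rec (0, A₀) (fun i a => nxt i a) i
    have hg : ∀ i, P i (g i) := by
      intro i
      induction i with
      | zero => exact ⟨hA₀, fun m _ => (hxδ m).le⟩
      | succ i ih => exact hnxt1 i _ ih
    exact ⟨g, rfl, fun i => ⟨hg i, hnxt2 i _ (hg i)⟩⟩
  obtain ⟨g, hg0, hg⟩ := hchain
  choose hst p hp hgp hT using hg
  obtain ⟨z, hz, hzx⟩ := exists_orbit_of_chain (n := fun i => (g i).1) (A := fun i => (g i).2)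
    hmaps hcont hg0 hp hgp hT
    (fun i => (hst i).1.nonempty (S _ (hη i)) F hx) (hst 0).1.subset
  have hmono : StrictMono fun i => (g i).1 := strictMono_nat_of_lt_succ fun i => by
    have := hp i; have := hgp i; omega
  have hfind : ∀ j k, (g k).1 ≤ j → ∃ i, k ≤ i ∧ (g i).1 ≤ j ∧ j < (g (i + 1)).1 := by
    intro j k hk
    have hex : ∃ i, j < (g i).1 := ⟨j + 1, (Nat.lt_succ_self j).trans_le (hmono.id_le (j + 1))⟩
    classical
    have h1 := Nat.find_spec hex
    have h2 : k < Nat.find hex := by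
      by_contra hcon
      exact absurd (hmono.monotone (not_lt.1 hcon)) (by omega)
    refine ⟨Nat.find hex - 1, by omega, ?_, by rwa [show Nat.find hex - 1 + 1 = Nat.find hex by omega]⟩
    exact not_lt.1 (Nat.find_min hex (by omega))
  refine ⟨z, hz, fun j => ?_, ?_⟩
  · obtain ⟨i, -, h1, h2⟩ := hfind j 0 (by omega)
    exact (hzx j i h1 h2).trans_lt (hL0 i)
  · rw [Metric.tendsto_atTop]
    intro ε' hε'
    obtain ⟨k, hk⟩ := exists_nat_one_div_lt (show (0 : ℝ) < ε' / 3 by linarith)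
    refine ⟨(g (k + 1)).1, fun j hj => ?_⟩
    obtain ⟨i, hi, h1, h2⟩ := hfind j (k + 1) hj
    rw [Real.dist_0_eq_abs, abs_of_nonneg dist_nonneg]
    refine (hzx j i h1 h2).trans_lt ?_
    have h3 : L (η i) ≤ L (η (k + 1)) := hanti hi
    have h4 : L (η (k + 1)) ≤ 1 / ((k : ℝ) + 1) :=
      (hLη _ (hη (k + 1))).trans ((hηs k).le.trans (min_le_right _ _))
    linarith

/-- The plain shadowing clause follows from the asymptotic one: a finite piece of a pseudo-orbit, continued
by a true orbit, is an asymptotic pseudo-orbit. -/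
theorem slimit_of_linking {f : ℝ → ℝ} {s : ℝ}
    (hmaps : MapsTo f (Icc (0 : ℝ) 1) (Icc (0 : ℝ) 1)) (hcont : ContinuousOn f (Icc (0 : ℝ) 1))
    (F : FoldMap f s (Crit f)) (hL : LinkingProperty f) :
    SLimitShadowingOn f (Icc (0 : ℝ) 1) := by
  intro ε hε
  obtain ⟨δ, hδ, h⟩ := asymptotic_of_linking hmaps hcont F hL (half_pos hε)
  refine ⟨δ, hδ, fun x hx hxδ => ?_, fun x hx hxδ hlim => ?_⟩
  · have hfin : ∀ N, ∃ z ∈ Icc (0 : ℝ) 1, ∀ n ≤ N, f^[n] z ∈ Metric.closedBall (x n) (ε / 2) := by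
      intro N
      let y : ℕ → ℝ := fun n => if n ≤ N then x n else f^[n - N] (x N)
      have hy : ∀ n, n ≤ N → y n = x n := fun n hn => if_pos hn
      have hy' : ∀ n, N ≤ n → y n = f^[n - N] (x N) := fun n hn => by
        rcases hn.eq_or_lt with rfl | h1
        · rw [hy _ le_rfl]; simp
        · exact if_neg (not_le.2 h1)
      have hexact : ∀ n, N ≤ n → dist (f (y n)) (y (n + 1)) = 0 := fun n hn => by
        rw [hy' n hn, hy' (n + 1) (by omega), ← Function.iterate_succ_apply' f,
          show n + 1 - N = (n - N).succ by omega, dist_self]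
      have hymem : ∀ n, y n ∈ Icc (0 : ℝ) 1 := fun n => by
        rcases le_total n N with hn | hn
        · rw [hy n hn]; exact hx n
        · rw [hy' n hn]; exact hmaps.iterate _ (hx N)
      have hyδ : ∀ n, dist (f (y n)) (y (n + 1)) < δ := fun n => by
        rcases lt_or_ge n N with hn | hn
        · rw [hy n hn.le, hy (n + 1) hn]; exact hxδ n
        · rw [hexact n hn]; exact hδ
      obtain ⟨z, hz, hzx, -⟩ := h y hymem hyδ
        (tendsto_const_nhds.congr' (eventually_atTop.2 ⟨N, fun n hn => (hexact n hn).symm⟩))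
      exact ⟨z, hz, fun n hn => by rw [← hy n hn]; exact (hzx n).le⟩
    obtain ⟨z, hz, hzx⟩ := exists_orbit_of_finite hmaps hcont
      (fun _ => Metric.isClosed_closedBall) hfin
    exact ⟨z, hz, fun n => (hzx n).trans_lt (half_lt_self hε)⟩
  · obtain ⟨z, hz, h1, h2⟩ := h x hx hxδ hlim
    exact ⟨z, hz, fun n => (h1 n).trans (half_lt_self hε), h2⟩
/-- For a topologically transitive continuous piecewise linear interval
map with constant slope `s > 1`, limit shadowing, shadowing, s-limit shadowing and the
linking property are all equivalent. -/
theorem limit_shadowing_iff_shadowing_of_transitive_pl_const_slope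
    (f : ℝ → ℝ) (s : ℝ) (hs : 1 < s)
    (hmaps : Set.MapsTo f (Set.Icc (0 : ℝ) 1) (Set.Icc (0 : ℝ) 1))
    (hcont : ContinuousOn f (Set.Icc (0 : ℝ) 1))
    (hpl : PiecewiseLinearConstSlope f s)
    (htrans : TransitiveOn f (Set.Icc (0 : ℝ) 1)) :
    (LimitShadowingOn f (Set.Icc (0 : ℝ) 1) ↔ ShadowingOn f (Set.Icc (0 : ℝ) 1)) ∧
    (LimitShadowingOn f (Set.Icc (0 : ℝ) 1) ↔ SLimitShadowingOn f (Set.Icc (0 : ℝ) 1)) ∧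
    (LimitShadowingOn f (Set.Icc (0 : ℝ) 1) ↔ LinkingProperty f) := by
  have F := foldMap_of_pl hs hmaps hcont hpl
  have h1 : LimitShadowingOn f (Set.Icc (0 : ℝ) 1) → ShadowingOn f (Set.Icc (0 : ℝ) 1) :=
    fun h => (finiteShadowing_of_limit hmaps htrans h).shadowing hmaps hcont
  have h2 : ShadowingOn f (Set.Icc (0 : ℝ) 1) → LinkingProperty f := linking_of_shadowing F
  have h3 : LinkingProperty f → SLimitShadowingOn f (Set.Icc (0 : ℝ) 1) :=
    slimit_of_linking hmaps hcont F
  have h4 : SLimitShadowingOn f (Set.Icc (0 : ℝ) 1) → LimitShadowingOn f (Set.Icc (0 : ℝ) 1) :=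
    limit_of_slimit (surj_of_transitive hmaps hcont htrans)
  exact ⟨⟨h1, fun h => h4 (h3 (h2 h))⟩, ⟨fun h => h3 (h2 (h1 h)), h4⟩,
    ⟨fun h => h2 (h1 h), fun h => h4 (h3 h)⟩⟩
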